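/- Let k ≥ 1 be a fixed integer and let K_n, P_n be scalings with K_n ≥ 2 for all sufficiently large n and P_n = Ω(n). Define α_n by K_n²/P_n = (ln n + (k−1)·ln ln n + α_n)/n. If lim_{n→∞} α_n = +∞, then P[G(n,K_n,P_n) is k-connected] → 1 as n → ∞. -/

import Mathlib

open MeasureTheory Filter Asymptotics
open scoped ENNReal

noncomputable section

/-- Key rings: `K`-element subsets of a key pool of size `P`. -/
abbrev KeyRing (P K : ℕ) : Type := {s : Finset (Fin P) // s.card = K}

instance (P K : ℕ) : MeasurableSpace (KeyRing P K) := ⊤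

/-- The uniform probability measure on key rings. -/
def uniformKeyMeasure (P K : ℕ) : Measure (KeyRing P K) :=
  (Fintype.card (KeyRing P K) : ℝ≥0∞)⁻¹ • (Measure.count : Measure (KeyRing P K))

/-- The Bernoulli measure with parameter `p` on `Bool`. -/
def bern (p : ℝ) : Measure Bool :=
  ENNReal.ofReal p • Measure.dirac true + ENNReal.ofReal (1 - p) • Measure.dirac false

/-- Sample space underlying `𝔾_on(n, K, P, p)`: independent key rings for the `n`
nodes together with independent on/off channel states for each pair of nodes. -/
abbrev GonSpace (n K P : ℕ) : Type :=
  (Fin n → KeyRing P K) × (Sym2 (Fin n) → Bool)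

/-- The probability measure of the model `𝔾_on(n, K, P, p)`: the key rings of the
`n` nodes are independent and uniform, and the channels are independent
Bernoulli(`p`) variables, independent of the key rings. -/
def gonMeasure (n K P : ℕ) (p : ℝ) : Measure (GonSpace n K P) :=
  (Measure.pi fun _ : Fin n => uniformKeyMeasure P K).prod
    (Measure.pi fun _ : Sym2 (Fin n) => bern p)

/-- The random graph `𝔾_on`: an edge is present iff the key rings intersect and the
channel between the two nodes is on. -/
def gonGraph {n K P : ℕ} (ω : GonSpace n K P) : SimpleGraph (Fin n) where
  Adj i j := i ≠ j ∧ ((ω.1 i).1 ∩ (ω.1 j).1).Nonempty ∧ ω.2 s(i, j) = true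
  symm := by
    constructor
    rintro i j ⟨h1, h2, h3⟩
    exact ⟨h1.symm, by rwa [Finset.inter_comm], by rwa [Sym2.eq_swap]⟩
  loopless := ⟨fun i h => h.1 rfl⟩

/-- The random key graph `G(n, K, P)`: an edge is present iff the key rings intersect. -/
def rkgGraph {n K P : ℕ} (ω : Fin n → KeyRing P K) : SimpleGraph (Fin n) where
  Adj i j := i ≠ j ∧ ((ω i).1 ∩ (ω j).1).Nonempty
  symm := by
    constructor
    rintro i j ⟨h1, h2⟩
    exact ⟨h1.symm, by rwa [Finset.inter_comm]⟩
  loopless := ⟨fun i h => h.1 rfl⟩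

/-- The probability measure of the random key graph model. -/
def rkgMeasure (n K P : ℕ) : Measure (Fin n → KeyRing P K) :=
  Measure.pi fun _ : Fin n => uniformKeyMeasure P K

/-- Degree of a vertex. -/
def gDeg {V : Type*} (G : SimpleGraph V) (v : V) : ℕ := Nat.card {w // G.Adj v w}

/-- Minimum vertex degree. -/
def minDeg {V : Type*} (G : SimpleGraph V) : ℕ := sInf (Set.range (gDeg G))

/-- A graph is `k`-connected if it remains connected after the removal of any
`k - 1` of its vertices. -/
def KConnected {V : Type*} (G : SimpleGraph V) (k : ℕ) : Prop :=
  ∀ S : Finset V, S.card ≤ k - 1 → (G.induce ((S : Set V)ᶜ)).Connected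

/-- Vertex connectivity: the least number of vertices whose deletion disconnects
the graph. -/
def vertexConn {V : Type*} (G : SimpleGraph V) : ℕ :=
  sInf {m | ∃ S : Finset V, S.card = m ∧ ¬ (G.induce ((S : Set V)ᶜ)).Connected}

/-- `p_s`: the probability that two key rings share at least one key. -/
def psf (K P : ℕ) : ℝ :=
  if 2 * K ≤ P then 1 - (Nat.choose (P - K) K : ℝ) / (Nat.choose P K : ℝ) else 1

/-- `p_e = p · p_s`: the probability of an edge in `𝔾_on`. -/
def pef (K P : ℕ) (p : ℝ) : ℝ := p * psf K P

/-- The event `D_{x,ℓ}` that the node with index `x` has degree exactly `ℓ`. -/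
def degEvent (n K P : ℕ) (x ℓ : ℕ) : Set (GonSpace n K P) :=
  {ω | ∃ hx : x < n, gDeg (gonGraph ω) ⟨x, hx⟩ = ℓ}

/-- The event `E_{xy}` that the edge between the nodes with indices `x`, `y` is present. -/
def edgeEvent (n K P : ℕ) (x y : ℕ) : Set (GonSpace n K P) :=
  {ω | ∃ (hx : x < n) (hy : y < n), (gonGraph ω).Adj ⟨x, hx⟩ ⟨y, hy⟩}

/-- The event that the key rings of nodes `x` and `y` share exactly `u` keys. -/
def interCardEvent (n K P : ℕ) (x y u : ℕ) : Set (GonSpace n K P) :=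
  {ω | ∃ (hx : x < n) (hy : y < n), ((ω.1 ⟨x, hx⟩).1 ∩ (ω.1 ⟨y, hy⟩).1).card = u}

/-- The event `K_{xy}` that the key rings of nodes `x` and `y` share at least one key. -/
def keyShareEvent (n K P : ℕ) (x y : ℕ) : Set (GonSpace n K P) :=
  {ω | ∃ (hx : x < n) (hy : y < n), ((ω.1 ⟨x, hx⟩).1 ∩ (ω.1 ⟨y, hy⟩).1).Nonempty}

/-- `r_n = min(⌊P/K⌋, ⌊n/2⌋)`. -/
def rn (n K P : ℕ) : ℕ := min (P / K) (n / 2)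

/-- The threshold array `J`. -/
def Jarr (n K P : ℕ) (ε lam mu : ℝ) (i : ℕ) : ℕ :=
  if i ≤ rn n K P then max ⌊(1 + ε) * (K : ℝ)⌋₊ ⌊lam * (K : ℝ) * (i : ℝ)⌋₊
  else ⌊mu * (P : ℝ)⌋₊

/-- The event `𝓔(J)`: some set `T` of at least two nodes has a union of key rings of
size at most `J_{|T|}`. -/
def EJ (n K P : ℕ) (ε lam mu : ℝ) : Set (GonSpace n K P) :=
  {ω | ∃ T : Finset (Fin n), 2 ≤ T.card ∧
    (T.biUnion fun i => (ω.1 i).1).card ≤ Jarr n K P ε lam mu T.card}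

open scoped BigOperators

section Resampling

variable {ι β : Type*} [Fintype ι] [DecidableEq ι] [Fintype β] [Nonempty β]

/-- Resampling one coordinate of a uniform random vector does not change expectations. -/
lemma expect_resample (a : ι) (f : (ι → β) → β → ℝ)
    (hf : ∀ ω t s, f (Function.update ω a t) s = f ω s) :
    𝔼 ω, f ω (ω a) = 𝔼 ω, 𝔼 s, f ω s := by
  have hinv : Function.Involutive
      (fun p : (ι → β) × β => ((Function.update p.1 a p.2, p.1 a) : (ι → β) × β)) := by
    rintro ⟨ω, s⟩
    simp
  have h1 : 𝔼 p : (ι → β) × β, f p.1 p.2 = 𝔼 ω, 𝔼 s, f ω s := by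
    rw [← Finset.univ_product_univ, Finset.expect_product']
  have h2 : 𝔼 p : (ι → β) × β, f p.1 (p.1 a) = 𝔼 ω, f ω (ω a) := by
    rw [← Finset.univ_product_univ, Finset.expect_product' (f := fun ω _ => f ω (ω a))]
    simp
  rw [← h1, ← h2]
  refine Fintype.expect_equiv hinv.toPerm _ _ ?_
  rintro ⟨ω, s⟩
  simp [Function.Involutive.toPerm, hf]

/-- Coordinates on which the other factors do not depend may be averaged out one by one. -/
lemma expect_mul_prod (C : Finset ι) (F : (ι → β) → ℝ) (g : ι → (ι → β) → β → ℝ)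
    (hF : ∀ a ∈ C, ∀ ω t, F (Function.update ω a t) = F ω)
    (hg : ∀ a ∈ C, ∀ v ω t s, g v (Function.update ω a t) s = g v ω s) :
    𝔼 ω, F ω * ∏ v ∈ C, g v ω (ω v) = 𝔼 ω, F ω * ∏ v ∈ C, 𝔼 s, g v ω s := by
  induction C using Finset.induction_on generalizing F with
  | empty => simp
  | insert a C ha ih =>
    have h1 := expect_resample a (fun ω s => (F ω * ∏ v ∈ C, g v ω (ω v)) * g a ω s) (by
      intro ω t s
      have : ∏ v ∈ C, g v (Function.update ω a t) (Function.update ω a t v)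
          = ∏ v ∈ C, g v ω (ω v) := by
        refine Finset.prod_congr rfl fun v hv => ?_
        rw [hg a (Finset.mem_insert_self a C), Function.update_of_ne]
        rintro rfl
        exact ha hv
      rw [this, hF a (Finset.mem_insert_self a C), hg a (Finset.mem_insert_self a C)])
    have h2 := ih (fun ω => F ω * 𝔼 s, g a ω s)
      (fun b hb ω t => by
        simp only [hF b (Finset.mem_insert_of_mem hb), hg b (Finset.mem_insert_of_mem hb)])
      (fun b hb => hg b (Finset.mem_insert_of_mem hb))
    calc 𝔼 ω, F ω * ∏ v ∈ insert a C, g v ω (ω v)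
        = 𝔼 ω, (F ω * ∏ v ∈ C, g v ω (ω v)) * g a ω (ω a) := by
          refine Finset.expect_congr rfl fun ω _ => ?_
          rw [Finset.prod_insert ha]; ring
      _ = 𝔼 ω, (F ω * 𝔼 s, g a ω s) * ∏ v ∈ C, g v ω (ω v) := by
          rw [h1]
          refine Finset.expect_congr rfl fun ω _ => ?_
          rw [← Finset.mul_expect]; ring
      _ = 𝔼 ω, F ω * ∏ v ∈ insert a C, 𝔼 s, g v ω s := by
          rw [h2]
          refine Finset.expect_congr rfl fun ω _ => ?_
          rw [Finset.prod_insert ha]; ring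

end Resampling

section SingleRing

lemma descFactorial_mul_pow_le {a P : ℕ} (h : a ≤ P) (b : ℕ) :
    a.descFactorial b * P ^ b ≤ P.descFactorial b * a ^ b := by
  induction b with
  | zero => simp
  | succ b ih =>
    rw [Nat.descFactorial_succ, Nat.descFactorial_succ, pow_succ, pow_succ]
    have h1 : (a - b) * P ≤ (P - b) * a := by
      rw [Nat.sub_mul, Nat.sub_mul, mul_comm P a]
      exact Nat.sub_le_sub_left (Nat.mul_le_mul_left b h) _
    calc (a - b) * a.descFactorial b * (P ^ b * P)
        = ((a - b) * P) * (a.descFactorial b * P ^ b) := by ring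
      _ ≤ ((P - b) * a) * (P.descFactorial b * a ^ b) := Nat.mul_le_mul h1 ih
      _ = _ := by ring

lemma choose_le_choose_mul_div_pow {a P : ℕ} (h : a ≤ P) (hP : 0 < P) (b : ℕ) :
    (a.choose b : ℝ) ≤ P.choose b * ((a : ℝ) / P) ^ b := by
  have h1 := descFactorial_mul_pow_le h b
  rw [Nat.descFactorial_eq_factorial_mul_choose, Nat.descFactorial_eq_factorial_mul_choose,
    mul_assoc, mul_assoc] at h1
  have h2 := Nat.le_of_mul_le_mul_left h1 (Nat.factorial_pos b)
  have hP' : (0 : ℝ) < (P : ℝ) ^ b := by positivity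
  rw [div_pow, ← mul_div_assoc, le_div_iff₀ hP']
  exact_mod_cast h2

variable {P K : ℕ}

lemma card_keyRing : Fintype.card (KeyRing P K) = P.choose K := by
  simp

lemma nonempty_keyRing (h : K ≤ P) : Nonempty (KeyRing P K) := by
  rw [← Fintype.card_pos_iff, card_keyRing]
  exact Nat.choose_pos h

lemma expect_ite_keyRing (p : Finset (Fin P) → Prop) [DecidablePred p] :
    𝔼 s : KeyRing P K, (if p s.1 then (1 : ℝ) else 0)
      = (((Finset.univ.powersetCard K).filter p).card : ℝ) / P.choose K := by
  rw [Fintype.expect_eq_sum_div_card, card_keyRing, Finset.sum_boole]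
  congr 2
  refine Finset.card_bij (fun s _ => s.1) ?_ ?_ ?_
  · intro s hs
    simp only [Finset.mem_filter, Finset.mem_univ, true_and] at hs
    simp [Finset.mem_powersetCard, s.2, hs]
  · intro s _ t _ h
    exact Subtype.ext h
  · intro t ht
    simp only [Finset.mem_filter, Finset.mem_powersetCard] at ht
    exact ⟨⟨t, ht.1.2⟩, by simp [ht.2], rfl⟩

/-- The probability that a key ring is contained in `W`. -/
lemma expect_subset_le (h : K ≤ P) (hP : 0 < P) (W : Finset (Fin P)) :
    𝔼 s : KeyRing P K, (if s.1 ⊆ W then (1 : ℝ) else 0) ≤ ((W.card : ℝ) / P) ^ K := by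
  rw [expect_ite_keyRing (fun s => s ⊆ W)]
  have hc : ((Finset.univ.powersetCard K).filter (fun s => s ⊆ W)) = W.powersetCard K := by
    ext s
    simp [Finset.mem_powersetCard, and_comm]
  have h0 : (0 : ℝ) < P.choose K := by exact_mod_cast Nat.choose_pos h
  rw [hc, Finset.card_powersetCard, div_le_iff₀ h0, mul_comm]
  exact choose_le_choose_mul_div_pow (by simpa using W.card_le_univ) hP K

/-- The probability that a key ring contains `B`. -/
lemma expect_superset_le (h : K ≤ P) (hP : 0 < P) (B : Finset (Fin P)) :
    𝔼 s : KeyRing P K, (if B ⊆ s.1 then (1 : ℝ) else 0) ≤ ((K : ℝ) / P) ^ B.card := by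
  have h0 : (0 : ℝ) < P.choose K := by exact_mod_cast Nat.choose_pos h
  rw [expect_ite_keyRing (fun s => B ⊆ s), div_le_iff₀ h0]
  have hBP : B.card ≤ P := by simpa using B.card_le_univ
  rcases lt_or_ge K B.card with hlt | hBK
  · have : ((Finset.univ.powersetCard K).filter (fun s : Finset (Fin P) => B ⊆ s)) = ∅ := by
      ext s
      simp only [Finset.mem_filter, Finset.mem_powersetCard, Finset.notMem_empty, iff_false]
      rintro ⟨⟨-, h1⟩, h2⟩
      have := Finset.card_le_card h2
      omega
    rw [this]
    simp only [Finset.card_empty, Nat.cast_zero]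
    positivity
  · have hc : ((Finset.univ.powersetCard K).filter (fun s : Finset (Fin P) => B ⊆ s)).card
        ≤ (P - B.card).choose (K - B.card) := by
      have hB : (Bᶜ : Finset (Fin P)).card = P - B.card := by simp [Finset.card_compl]
      rw [← hB, ← Finset.card_powersetCard]
      refine Finset.card_le_card_of_injOn (fun s => s \ B) ?_ ?_
      · intro s hs
        simp only [Finset.coe_filter, Finset.mem_powersetCard, Set.mem_ofPred_eq] at hs
        simp only [Finset.mem_coe, Finset.mem_powersetCard]
        refine ⟨?_, ?_⟩
        · intro x hx
          simp only [Finset.mem_sdiff] at hx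
          simpa using hx.2
        · rw [Finset.card_sdiff_of_subset hs.2, hs.1.2]
      · intro s hs t ht hst
        simp only [Finset.coe_filter, Finset.mem_powersetCard, Set.mem_ofPred_eq] at hs ht
        simp only at hst
        rw [← Finset.sdiff_union_of_subset hs.2, hst, Finset.sdiff_union_of_subset ht.2]
    have h1 := Nat.choose_mul (n := P) hBK
    have h2 := choose_le_choose_mul_div_pow h hP B.card
    have h3 : (0 : ℝ) < P.choose B.card := by exact_mod_cast Nat.choose_pos hBP
    have h1' : (P.choose K : ℝ) * K.choose B.card
        = P.choose B.card * (P - B.card).choose (K - B.card) := by exact_mod_cast h1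
    have hc' : ((((Finset.univ.powersetCard K).filter
        (fun s : Finset (Fin P) => B ⊆ s)).card : ℕ) : ℝ)
        ≤ ((P - B.card).choose (K - B.card) : ℕ) := by exact_mod_cast hc
    refine hc'.trans ?_
    refine le_of_mul_le_mul_left ?_ h3
    rw [← h1']
    calc (P.choose K : ℝ) * K.choose B.card
        ≤ P.choose K * (P.choose B.card * ((K : ℝ) / P) ^ B.card) := by gcongr
      _ = _ := by ring

/-- The probability that a key ring avoids `W`. -/
lemma expect_disjoint_le (h : K ≤ P) (hP : 0 < P) (W : Finset (Fin P)) :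
    𝔼 s : KeyRing P K, (if ¬ (s.1 ∩ W).Nonempty then (1 : ℝ) else 0)
      ≤ Real.exp (-((K : ℝ) / P * W.card)) := by
  have h1 := expect_subset_le h hP Wᶜ
  have hW : W.card ≤ P := by simpa using W.card_le_univ
  have hP' : (0 : ℝ) < P := by exact_mod_cast hP
  calc _ = 𝔼 s : KeyRing P K, (if s.1 ⊆ Wᶜ then (1 : ℝ) else 0) := by
        refine Finset.expect_congr rfl fun s _ => ?_
        congr 1
        rw [Finset.not_nonempty_iff_eq_empty, ← Finset.disjoint_iff_inter_eq_empty,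
          Finset.subset_compl_iff_disjoint_right]
    _ ≤ (((Wᶜ).card : ℝ) / P) ^ K := h1
    _ ≤ (Real.exp (-((W.card : ℝ) / P))) ^ K := by
        refine pow_le_pow_left₀ (by positivity) ?_ K
        have : (((Wᶜ).card : ℝ) / P) = -((W.card : ℝ) / P) + 1 := by
          rw [Finset.card_compl, Fintype.card_fin, Nat.cast_sub hW]
          field_simp
          ring
        rw [this]
        exact Real.add_one_le_exp _
    _ = _ := by
        rw [← Real.exp_nat_mul]
        congr 1
        ring

/-- The probability that a key ring meets `W`. -/
lemma expect_meets_le (h : K ≤ P) (hP : 0 < P) (W : Finset (Fin P)) :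
    𝔼 s : KeyRing P K, (if (s.1 ∩ W).Nonempty then (1 : ℝ) else 0)
      ≤ (K : ℝ) / P * W.card := by
  calc _ ≤ 𝔼 s : KeyRing P K, ∑ w ∈ W, (if {w} ⊆ s.1 then (1 : ℝ) else 0) := by
        refine Finset.expect_le_expect fun s _ => ?_
        split_ifs with hs
        · obtain ⟨w, hw⟩ := hs
          rw [Finset.mem_inter] at hw
          refine le_trans ?_ (Finset.single_le_sum
            (f := fun w => if {w} ⊆ s.1 then (1 : ℝ) else 0) (fun i _ => ?_) hw.2)
          · simp [hw.1]
          · split_ifs <;> norm_num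
        · exact Finset.sum_nonneg fun i _ => by split_ifs <;> norm_num
    _ = ∑ w ∈ W, 𝔼 s : KeyRing P K, (if {w} ⊆ s.1 then (1 : ℝ) else 0) :=
        Finset.expect_sum_comm _ _ _
    _ ≤ ∑ w ∈ W, (K : ℝ) / P := by
        refine Finset.sum_le_sum fun w _ => ?_
        simpa using expect_superset_le h hP {w}
    _ = _ := by simp [mul_comm]

/-- The exponential moment of the overlap of a key ring with `W`. -/
lemma expect_exp_inter_le (h : K ≤ P) (hP : 0 < P) (W : Finset (Fin P)) {θ : ℝ} (hθ : 0 ≤ θ) :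
    𝔼 s : KeyRing P K, Real.exp (θ * (s.1 ∩ W).card)
      ≤ Real.exp ((Real.exp θ - 1) * (K / P) * W.card) := by
  have hθ' : 0 ≤ Real.exp θ - 1 := by
    have := Real.add_one_le_exp θ
    linarith
  calc _ = 𝔼 s : KeyRing P K, ∑ B ∈ W.powerset,
          (Real.exp θ - 1) ^ B.card * (if B ⊆ s.1 then (1 : ℝ) else 0) := by
        refine Finset.expect_congr rfl fun s _ => ?_
        have h1 : Real.exp (θ * (s.1 ∩ W).card)
            = ∏ _i ∈ s.1 ∩ W, ((Real.exp θ - 1) + 1) := by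
          rw [Finset.prod_const, sub_add_cancel, ← Real.exp_nat_mul, mul_comm]
        rw [h1, Finset.prod_add_one]
        simp only [Finset.prod_const, mul_ite, mul_one, mul_zero]
        rw [← Finset.sum_filter]
        refine Finset.sum_congr ?_ fun _ _ => rfl
        ext B
        simp only [Finset.mem_powerset, Finset.mem_filter, Finset.subset_inter_iff]
        tauto
    _ = ∑ B ∈ W.powerset, (Real.exp θ - 1) ^ B.card *
          𝔼 s : KeyRing P K, (if B ⊆ s.1 then (1 : ℝ) else 0) := by
        rw [Finset.expect_sum_comm]
        simp only [Finset.mul_expect]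
    _ ≤ ∑ B ∈ W.powerset, (Real.exp θ - 1) ^ B.card * ((K : ℝ) / P) ^ B.card := by
        refine Finset.sum_le_sum fun B _ => ?_
        exact mul_le_mul_of_nonneg_left (expect_superset_le h hP B) (by positivity)
    _ = ∏ _i ∈ W, ((Real.exp θ - 1) * ((K : ℝ) / P) + 1) := by
        rw [Finset.prod_add_one]
        simp only [Finset.prod_const, mul_pow]
    _ ≤ (Real.exp ((Real.exp θ - 1) * (K / P))) ^ W.card := by
        rw [Finset.prod_const]
        exact pow_le_pow_left₀ (by positivity) (Real.add_one_le_exp _) _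
    _ = _ := by
        rw [← Real.exp_nat_mul]
        congr 1
        ring

end SingleRing

section KeyUnion

variable {n P K : ℕ}

/-- The set of keys held by the nodes in `A`. -/
def keyUnion (ω : Fin n → KeyRing P K) (A : Finset (Fin n)) : Finset (Fin P) :=
  A.biUnion fun i => (ω i).1

lemma keyUnion_update (ω : Fin n → KeyRing P K) {A : Finset (Fin n)} {a : Fin n} (ha : a ∉ A)
    (t : KeyRing P K) : keyUnion (Function.update ω a t) A = keyUnion ω A := by
  refine Finset.biUnion_congr rfl fun v hv => ?_
  rw [Function.update_of_ne]
  rintro rfl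
  exact ha hv

lemma card_keyUnion_le (ω : Fin n → KeyRing P K) (A : Finset (Fin n)) :
    (keyUnion ω A).card ≤ A.card * K :=
  Finset.card_biUnion_le_card_mul _ _ _ fun i _ => (ω i).2.le

/-- Exponential moment bound for the number of keys held by a small set of nodes. -/
lemma expect_exp_keyUnion_le (h : K ≤ P) (hP : 0 < P) {θ : ℝ} (hθ : 0 ≤ θ)
    (A : Finset (Fin n)) :
    𝔼 ω : Fin n → KeyRing P K, Real.exp (-(θ * (keyUnion ω A).card))
      ≤ Real.exp (-(θ * (A.card * K)) + (Real.exp θ - 1) * (K / P) * K * (A.card : ℝ) ^ 2) := by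
  have := nonempty_keyRing h
  have hθ' : 0 ≤ Real.exp θ - 1 := by
    have := Real.add_one_le_exp θ
    linarith
  induction A using Finset.induction_on with
  | empty => simp [keyUnion]
  | insert a A ha ih =>
    set c : ℝ := (Real.exp θ - 1) * (K / P) with hc
    have hc0 : 0 ≤ c := by positivity
    calc 𝔼 ω : Fin n → KeyRing P K, Real.exp (-(θ * (keyUnion ω (insert a A)).card))
        = 𝔼 ω : Fin n → KeyRing P K, Real.exp (-(θ * (keyUnion ω A).card)) *
            Real.exp (-(θ * K)) * Real.exp (θ * ((ω a).1 ∩ keyUnion ω A).card) := by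
          refine Finset.expect_congr rfl fun ω _ => ?_
          rw [← Real.exp_add, ← Real.exp_add]
          congr 1
          have h1 : keyUnion ω (insert a A) = (ω a).1 ∪ keyUnion ω A := by
            simp [keyUnion, Finset.biUnion_insert]
          have h2 := Finset.card_union_add_card_inter (ω a).1 (keyUnion ω A)
          rw [← h1, (ω a).2] at h2
          have h3 : ((keyUnion ω (insert a A)).card : ℝ) + ((ω a).1 ∩ keyUnion ω A).card
              = K + (keyUnion ω A).card := by exact_mod_cast h2
          linear_combination (-θ) * h3
      _ = 𝔼 ω : Fin n → KeyRing P K, 𝔼 s : KeyRing P K,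
            Real.exp (-(θ * (keyUnion ω A).card)) *
            Real.exp (-(θ * K)) * Real.exp (θ * (s.1 ∩ keyUnion ω A).card) := by
          refine expect_resample a (fun ω s => Real.exp (-(θ * (keyUnion ω A).card)) *
            Real.exp (-(θ * K)) * Real.exp (θ * (s.1 ∩ keyUnion ω A).card)) ?_
          intro ω t s
          rw [keyUnion_update ω ha]
      _ ≤ 𝔼 ω : Fin n → KeyRing P K, Real.exp (-(θ * (keyUnion ω A).card)) *
            (Real.exp (-(θ * K)) * Real.exp (c * (A.card * K))) := by
          refine Finset.expect_le_expect fun ω _ => ?_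
          rw [← Finset.mul_expect, mul_assoc]
          refine mul_le_mul_of_nonneg_left ?_ (Real.exp_nonneg _)
          refine mul_le_mul_of_nonneg_left ?_ (Real.exp_nonneg _)
          refine (expect_exp_inter_le h hP _ hθ).trans ?_
          refine Real.exp_le_exp.2 (mul_le_mul_of_nonneg_left ?_ hc0)
          exact_mod_cast card_keyUnion_le ω A
      _ ≤ Real.exp (-(θ * (A.card * K)) + c * K * (A.card : ℝ) ^ 2) *
            (Real.exp (-(θ * K)) * Real.exp (c * (A.card * K))) := by
          rw [← Finset.expect_mul]
          exact mul_le_mul_of_nonneg_right ih (by positivity)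
      _ ≤ _ := by
          rw [← Real.exp_add, ← Real.exp_add, Finset.card_insert_of_notMem ha]
          refine Real.exp_le_exp.2 ?_
          push_cast
          have : 0 ≤ c * K * (A.card + 1) := by positivity
          nlinarith

/-- Either the nodes in `A` hold at least `m` keys or all their keys lie in a set of size `m`. -/
lemma exp_keyUnion_le_add_sum {θ : ℝ} (hθ : 0 ≤ θ) (A : Finset (Fin n)) {m : ℕ} (hm : m ≤ P)
    (ω : Fin n → KeyRing P K) :
    Real.exp (-(θ * (keyUnion ω A).card)) ≤
      Real.exp (-(θ * m)) + ∑ W ∈ Finset.univ.powersetCard m,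
        1 * ∏ v ∈ A, (if (ω v).1 ⊆ W then (1 : ℝ) else 0) := by
  have hnn : ∀ W ∈ (Finset.univ : Finset (Fin P)).powersetCard m,
      0 ≤ 1 * ∏ v ∈ A, (if (ω v).1 ⊆ W then (1 : ℝ) else 0) := fun W _ => by
    rw [one_mul]
    exact Finset.prod_nonneg fun v _ => by split_ifs <;> norm_num
  rcases le_or_gt m (keyUnion ω A).card with hle | hlt
  · have h1 : Real.exp (-(θ * (keyUnion ω A).card)) ≤ Real.exp (-(θ * m)) := by
      gcongr
    linarith [Finset.sum_nonneg hnn]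
  · obtain ⟨W, hUW, -, hW⟩ := Finset.exists_subsuperset_card_eq
      (Finset.subset_univ (keyUnion ω A)) hlt.le (by simpa using hm)
    have h1 := Finset.single_le_sum hnn
      (Finset.mem_powersetCard.2 ⟨Finset.subset_univ W, hW⟩)
    have h2 : 1 * ∏ v ∈ A, (if (ω v).1 ⊆ W then (1 : ℝ) else 0) = 1 := by
      rw [one_mul]
      refine Finset.prod_eq_one fun v hv => ?_
      rw [if_pos]
      exact (Finset.subset_biUnion_of_mem (fun i => (ω i).1) hv).trans hUW
    have h3 : Real.exp (-(θ * (keyUnion ω A).card)) ≤ 1 := by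
      rw [Real.exp_le_one_iff]
      have : 0 ≤ θ * (keyUnion ω A).card := by positivity
      linarith
    linarith [Real.exp_nonneg (-(θ * m))]

/-- The number of keys held by a set of nodes is unlikely to be below `m`. -/
lemma expect_exp_keyUnion_le_add (h : K ≤ P) (hP : 0 < P) {θ : ℝ} (hθ : 0 ≤ θ)
    (A : Finset (Fin n)) {m : ℕ} (hm : m ≤ P) :
    𝔼 ω : Fin n → KeyRing P K, Real.exp (-(θ * (keyUnion ω A).card))
      ≤ Real.exp (-(θ * m)) + P.choose m * ((m : ℝ) / P) ^ (K * A.card) := by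
  have := nonempty_keyRing h
  have hW : ∀ W ∈ (Finset.univ : Finset (Fin P)).powersetCard m,
      𝔼 ω : Fin n → KeyRing P K, 1 * ∏ v ∈ A, (if (ω v).1 ⊆ W then (1 : ℝ) else 0)
        ≤ ((m : ℝ) / P) ^ (K * A.card) := by
    intro W hW
    rw [expect_mul_prod A (fun _ => 1) (fun _ _ (s : KeyRing P K) => if s.1 ⊆ W then (1 : ℝ) else 0)
      (fun _ _ _ _ => rfl) (fun _ _ _ _ _ _ => rfl), Fintype.expect_const, one_mul,
      Finset.prod_const, pow_mul]
    refine pow_le_pow_left₀ (Finset.expect_nonneg fun s _ => by split_ifs <;> norm_num) ?_ _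
    rw [← (Finset.mem_powersetCard.1 hW).2]
    exact expect_subset_le h hP W
  refine (Finset.expect_le_expect fun ω _ => exp_keyUnion_le_add_sum hθ A hm ω).trans ?_
  rw [Finset.expect_add_distrib, Fintype.expect_const, Finset.expect_sum_comm]
  refine add_le_add le_rfl ((Finset.sum_le_sum hW).trans_eq ?_)
  rw [Finset.sum_const, Finset.card_powersetCard, Finset.card_univ, Fintype.card_fin,
    nsmul_eq_mul]

/-- The nodes outside `A` with a neighbour in `A` are exactly those in `J`. -/
def OuterBoundary (ω : Fin n → KeyRing P K) (A J : Finset (Fin n)) : Prop :=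
  ∀ v ∈ Aᶜ, (v ∈ J ↔ ((ω v).1 ∩ keyUnion ω A).Nonempty)

open Classical in
lemma expect_outerBoundary_le (h : K ≤ P) (hP : 0 < P) {A J : Finset (Fin n)}
    (hAJ : J ⊆ Aᶜ) :
    𝔼 ω : Fin n → KeyRing P K, (if OuterBoundary ω A J then (1 : ℝ) else 0)
      ≤ ((K : ℝ) / P * (A.card * K)) ^ J.card *
        𝔼 ω : Fin n → KeyRing P K,
          Real.exp (-(((n : ℝ) - A.card - J.card) * (K / P) * (keyUnion ω A).card)) := by
  have := nonempty_keyRing h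
  set g : Fin n → (Fin n → KeyRing P K) → KeyRing P K → ℝ := fun v ω s =>
    if (v ∈ J ↔ (s.1 ∩ keyUnion ω A).Nonempty) then 1 else 0 with hg
  calc _ = 𝔼 ω : Fin n → KeyRing P K, (1 : ℝ) * ∏ v ∈ Aᶜ, g v ω (ω v) := by
        refine Finset.expect_congr rfl fun ω _ => ?_
        rw [one_mul, hg]
        dsimp only
        rw [Finset.prod_boole]
        by_cases hb : OuterBoundary ω A J
        · rw [if_pos hb, if_pos (by exact hb)]
        · rw [if_neg hb, if_neg (by exact hb)]
    _ = 𝔼 ω : Fin n → KeyRing P K, (1 : ℝ) * ∏ v ∈ Aᶜ, 𝔼 s, g v ω s := by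
        refine expect_mul_prod Aᶜ (fun _ => 1) g (fun _ _ _ _ => rfl) ?_
        intro a ha v ω t s
        simp only [hg, keyUnion_update ω (Finset.mem_compl.1 ha)]
    _ ≤ 𝔼 ω : Fin n → KeyRing P K, ((K : ℝ) / P * (A.card * K)) ^ J.card *
          Real.exp (-(((n : ℝ) - A.card - J.card) * (K / P) * (keyUnion ω A).card)) := by
        refine Finset.expect_le_expect fun ω _ => ?_
        rw [one_mul, ← Finset.prod_sdiff hAJ, mul_comm]
        have hgn : ∀ v, 0 ≤ 𝔼 s, g v ω s := fun v =>
          Finset.expect_nonneg fun s _ => by simp only [hg]; split_ifs <;> norm_num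
        refine mul_le_mul ?_ ?_ (Finset.prod_nonneg fun v _ => hgn v) (by positivity)
        · rw [← Finset.prod_const]
          refine Finset.prod_le_prod (fun v _ => hgn v) fun v hv => ?_
          have : 𝔼 s, g v ω s
              = 𝔼 s : KeyRing P K, if (s.1 ∩ keyUnion ω A).Nonempty then (1 : ℝ) else 0 := by
            simp only [hg, hv, true_iff]
          rw [this]
          refine (expect_meets_le h hP _).trans ?_
          gcongr
          exact_mod_cast card_keyUnion_le ω A
        · calc ∏ v ∈ Aᶜ \ J, 𝔼 s, g v ω s
              ≤ ∏ _v ∈ Aᶜ \ J, Real.exp (-((K : ℝ) / P * (keyUnion ω A).card)) := by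
                refine Finset.prod_le_prod (fun v _ => hgn v) fun v hv => ?_
                have hvJ : v ∉ J := (Finset.mem_sdiff.1 hv).2
                have : 𝔼 s, g v ω s = 𝔼 s : KeyRing P K,
                    if ¬ (s.1 ∩ keyUnion ω A).Nonempty then (1 : ℝ) else 0 := by
                  simp only [hg, hvJ, false_iff]
                rw [this]
                convert expect_disjoint_le h hP _
            _ = _ := by
                have hA : A.card ≤ n := by simpa using A.card_le_univ
                have hJ := Finset.card_le_card hAJ
                rw [Finset.card_compl, Fintype.card_fin] at hJ
                rw [Finset.prod_const, Finset.card_sdiff_of_subset hAJ, Finset.card_compl,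
                  Fintype.card_fin, ← Real.exp_nat_mul, Nat.cast_sub hJ, Nat.cast_sub hA]
                congr 1
                ring
    _ = _ := by rw [Finset.mul_expect]

end KeyUnion

section UnionBound

open Classical in
/-- A graph which is not `k`-connected has a nonempty set of at most half of the vertices with
fewer than `k` outer neighbours. -/
lemma exists_small_boundary_of_not_kConnected {n k : ℕ} (hk : 1 ≤ k) (hkn : k ≤ n)
    {G : SimpleGraph (Fin n)} (hG : ¬ KConnected G k) :
    ∃ A : Finset (Fin n), 1 ≤ A.card ∧ A.card ≤ n / 2 ∧
      (Finset.univ.filter fun v => v ∉ A ∧ ∃ a ∈ A, G.Adj a v).card < k := by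
  unfold KConnected at hG
  push Not at hG
  obtain ⟨S, hS, hGS⟩ := hG
  have hne : Nonempty ((S : Set (Fin n))ᶜ : Set (Fin n)) := by
    obtain ⟨v, hv⟩ : ∃ v, v ∉ S := by
      by_contra! hall
      have : S = Finset.univ := Finset.eq_univ_iff_forall.2 hall
      rw [this, Finset.card_univ, Fintype.card_fin] at hS
      omega
    exact ⟨⟨v, by simpa using hv⟩⟩
  have hpre : ¬ (G.induce ((S : Set (Fin n))ᶜ)).Preconnected := fun h => hGS ⟨h⟩
  unfold SimpleGraph.Preconnected at hpre
  push Not at hpre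
  obtain ⟨a, b, hab⟩ := hpre
  set R : Fin n → Prop := fun v =>
    ∃ hv : v ∈ ((S : Set (Fin n))ᶜ : Set (Fin n)),
      (G.induce ((S : Set (Fin n))ᶜ)).Reachable a ⟨v, hv⟩ with hR
  have hstep : ∀ u v, R u → G.Adj u v → v ∉ S → R v := by
    rintro u v ⟨hu, hru⟩ huv hv
    have hv' : v ∈ ((S : Set (Fin n))ᶜ : Set (Fin n)) := by simpa using hv
    refine ⟨hv', hru.trans (SimpleGraph.Adj.reachable ?_)⟩
    simpa using huv
  have hRS : ∀ v, R v → v ∉ S := fun v hv => by simpa using hv.1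
  have key : ∀ A : Finset (Fin n), (∀ u v, u ∈ A → G.Adj u v → v ∉ S → v ∈ A) →
      (Finset.univ.filter fun v => v ∉ A ∧ ∃ a ∈ A, G.Adj a v).card < k := by
    intro A hA
    have : (Finset.univ.filter fun v => v ∉ A ∧ ∃ a ∈ A, G.Adj a v) ⊆ S := by
      intro v hv
      simp only [Finset.mem_filter, Finset.mem_univ, true_and] at hv
      obtain ⟨hvA, u, hu, huv⟩ := hv
      by_contra hvS
      exact hvA (hA u v hu huv hvS)
    have := Finset.card_le_card this
    omega
  set A₁ : Finset (Fin n) := Finset.univ.filter R with hA₁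
  set A₂ : Finset (Fin n) := Finset.univ.filter (fun v => v ∉ S ∧ ¬ R v) with hA₂
  have hdisj : Disjoint A₁ A₂ := by
    rw [Finset.disjoint_left]
    intro v h1 h2
    simp only [hA₁, hA₂, Finset.mem_filter, Finset.mem_univ, true_and] at h1 h2
    exact h2.2 h1
  have hcard : A₁.card + A₂.card ≤ n := by
    rw [← Finset.card_union_of_disjoint hdisj]
    simpa using (A₁ ∪ A₂).card_le_univ
  have h1 : 1 ≤ A₁.card := Finset.card_pos.2 ⟨a.1, by
    simp only [hA₁, Finset.mem_filter, Finset.mem_univ, true_and]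
    exact ⟨a.2, SimpleGraph.Reachable.refl _⟩⟩
  have h2 : 1 ≤ A₂.card := Finset.card_pos.2 ⟨b.1, by
    simp only [hA₂, Finset.mem_filter, Finset.mem_univ, true_and]
    exact ⟨fun hb => b.2 hb, fun ⟨_, h⟩ => hab h⟩⟩
  rcases le_total A₁.card A₂.card with hle | hle
  · refine ⟨A₁, h1, by omega, key A₁ ?_⟩
    intro u v hu huv hv
    simp only [hA₁, Finset.mem_filter, Finset.mem_univ, true_and] at hu ⊢
    exact hstep u v hu huv hv
  · refine ⟨A₂, h2, by omega, key A₂ ?_⟩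
    intro u v hu huv hv
    simp only [hA₂, Finset.mem_filter, Finset.mem_univ, true_and] at hu ⊢
    exact ⟨hv, fun hRv => hu.2 (hstep v u hRv huv.symm hu.1)⟩

variable {n P K : ℕ}

lemma exists_outerBoundary {k : ℕ} (hk : 1 ≤ k) (hkn : k ≤ n) {ω : Fin n → KeyRing P K}
    (hG : ¬ KConnected (rkgGraph ω) k) :
    ∃ A : Finset (Fin n), (1 ≤ A.card ∧ A.card ≤ n / 2) ∧
      ∃ J : Finset (Fin n), (J ⊆ Aᶜ ∧ J.card < k) ∧ OuterBoundary ω A J := by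
  classical
  obtain ⟨A, hA1, hA2, hJ⟩ := exists_small_boundary_of_not_kConnected hk hkn hG
  refine ⟨A, ⟨hA1, hA2⟩, _, ⟨?_, hJ⟩, ?_⟩
  · intro v hv
    simp only [Finset.mem_filter, Finset.mem_univ, true_and] at hv
    simpa using hv.1
  · intro v hv
    rw [Finset.mem_compl] at hv
    simp only [Finset.mem_filter, Finset.mem_univ, true_and, hv, not_false_eq_true]
    constructor
    · rintro ⟨a, ha, -, x, hx⟩
      rw [Finset.mem_inter] at hx
      exact ⟨x, Finset.mem_inter.2 ⟨hx.2, Finset.mem_biUnion.2 ⟨a, ha, hx.1⟩⟩⟩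
    · rintro ⟨x, hx⟩
      rw [Finset.mem_inter] at hx
      obtain ⟨a, ha, hxa⟩ := Finset.mem_biUnion.1 hx.2
      refine ⟨a, ha, ?_, x, Finset.mem_inter.2 ⟨hxa, hx.1⟩⟩
      rintro rfl
      exact hv ha

/-- For disjoint `A` and `J`, a bound which is uniform over `|J| < k`. -/
lemma exp_keyUnion_anti {k : ℕ} {A J : Finset (Fin n)} (hJ : J.card < k)
    (ω : Fin n → KeyRing P K) :
    Real.exp (-(((n : ℝ) - A.card - J.card) * (K / P) * (keyUnion ω A).card))
      ≤ Real.exp (-(((n : ℝ) - A.card - k) * (K / P) * (keyUnion ω A).card)) := by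
  have : (J.card : ℝ) ≤ k := by exact_mod_cast hJ.le
  gcongr

open Classical in
/-- Union bound for the failure of `k`-connectivity. -/
lemma expect_not_kConnected_le {k : ℕ} (hk : 1 ≤ k) (hkn : k ≤ n) (h : K ≤ P) (hP : 0 < P)
    (M : ℕ → ℝ)
    (hM : ∀ A : Finset (Fin n), 1 ≤ A.card → A.card ≤ n / 2 →
      𝔼 ω : Fin n → KeyRing P K,
        Real.exp (-(((n : ℝ) - A.card - k) * (K / P) * (keyUnion ω A).card)) ≤ M A.card) :
    𝔼 ω : Fin n → KeyRing P K, (if KConnected (rkgGraph ω) k then (0 : ℝ) else 1)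
      ≤ ∑ r ∈ Finset.Icc 1 (n / 2), n.choose r *
          ((∑ j ∈ Finset.range k, (r * (n * ((K : ℝ) ^ 2 / P))) ^ j) * M r) := by
  have := nonempty_keyRing h
  set 𝒜 : Finset (Finset (Fin n)) :=
    Finset.univ.filter (fun A => 1 ≤ A.card ∧ A.card ≤ n / 2) with h𝒜
  set 𝒥 : Finset (Fin n) → Finset (Finset (Fin n)) :=
    fun A => Finset.univ.filter (fun J => J ⊆ Aᶜ ∧ J.card < k) with h𝒥
  have hpt : ∀ ω : Fin n → KeyRing P K, (if KConnected (rkgGraph ω) k then (0 : ℝ) else 1)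
      ≤ ∑ A ∈ 𝒜, ∑ J ∈ 𝒥 A, (if OuterBoundary ω A J then (1 : ℝ) else 0) := by
    intro ω
    have hnn : ∀ A J, (0 : ℝ) ≤ (if OuterBoundary ω A J then (1 : ℝ) else 0) :=
      fun A J => by split_ifs <;> norm_num
    split_ifs with hc
    · exact Finset.sum_nonneg fun A _ => Finset.sum_nonneg fun J _ => hnn A J
    · obtain ⟨A, hA, J, hJ, hB⟩ := exists_outerBoundary hk hkn hc
      calc (1 : ℝ) = if OuterBoundary ω A J then (1 : ℝ) else 0 := by rw [if_pos hB]
        _ ≤ ∑ J ∈ 𝒥 A, (if OuterBoundary ω A J then (1 : ℝ) else 0) :=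
            Finset.single_le_sum (f := fun J => if OuterBoundary ω A J then (1 : ℝ) else 0)
              (fun J _ => hnn A J) (by simp only [h𝒥, Finset.mem_filter]; exact ⟨by simp, hJ⟩)
        _ ≤ _ := Finset.single_le_sum
              (f := fun A => ∑ J ∈ 𝒥 A, if OuterBoundary ω A J then (1 : ℝ) else 0)
              (fun A _ => Finset.sum_nonneg fun J _ => hnn A J)
              (by simp only [h𝒜, Finset.mem_filter]; exact ⟨by simp, hA⟩)
  have hM0 : ∀ A ∈ 𝒜, 0 ≤ M A.card := by
    intro A hA
    simp only [h𝒜, Finset.mem_filter, Finset.mem_univ, true_and] at hA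
    exact (Finset.expect_nonneg fun ω _ => Real.exp_nonneg _).trans (hM A hA.1 hA.2)
  have hAJ : ∀ A ∈ 𝒜, ∀ J ∈ 𝒥 A,
      𝔼 ω : Fin n → KeyRing P K, (if OuterBoundary ω A J then (1 : ℝ) else 0)
        ≤ (A.card * ((K : ℝ) ^ 2 / P)) ^ J.card * M A.card := by
    intro A hA J hJ
    simp only [h𝒜, h𝒥, Finset.mem_filter, Finset.mem_univ, true_and] at hA hJ
    refine (expect_outerBoundary_le h hP hJ.1).trans ?_
    have h1 : (K : ℝ) / P * (A.card * K) = A.card * ((K : ℝ) ^ 2 / P) := by ring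
    rw [h1]
    refine mul_le_mul_of_nonneg_left ?_ (by positivity)
    exact (Finset.expect_le_expect fun ω _ => exp_keyUnion_anti hJ.2 ω).trans
      (hM A hA.1 hA.2)
  have hJsum : ∀ A ∈ 𝒜, ∑ J ∈ 𝒥 A, ((A.card : ℝ) * ((K : ℝ) ^ 2 / P)) ^ J.card
      ≤ ∑ j ∈ Finset.range k, (A.card * (n * ((K : ℝ) ^ 2 / P))) ^ j := by
    intro A _
    have hmap : ∀ J ∈ 𝒥 A, J.card ∈ Finset.range k := by
      intro J hJ
      simp only [h𝒥, Finset.mem_filter, Finset.mem_univ, true_and] at hJ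
      simpa using hJ.2
    refine (Finset.sum_fiberwise_of_maps_to hmap _).symm.trans_le ?_
    refine Finset.sum_le_sum fun j _ => ?_
    calc ∑ J ∈ 𝒥 A with J.card = j, ((A.card : ℝ) * ((K : ℝ) ^ 2 / P)) ^ J.card
        = ((𝒥 A).filter (fun J => J.card = j)).card * ((A.card : ℝ) * ((K : ℝ) ^ 2 / P)) ^ j := by
          have hcongr : ∀ J ∈ (𝒥 A).filter (fun J => J.card = j),
              ((A.card : ℝ) * ((K : ℝ) ^ 2 / P)) ^ J.card
                = ((A.card : ℝ) * ((K : ℝ) ^ 2 / P)) ^ j := fun J hJ => by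
            rw [(Finset.mem_filter.1 hJ).2]
          rw [Finset.sum_congr rfl hcongr, Finset.sum_const, nsmul_eq_mul]
      _ ≤ (n : ℝ) ^ j * ((A.card : ℝ) * ((K : ℝ) ^ 2 / P)) ^ j := by
          refine mul_le_mul_of_nonneg_right ?_ (by positivity)
          have h1 : ((𝒥 A).filter (fun J => J.card = j)).card ≤ n.choose j := by
            calc _ ≤ ((Finset.univ : Finset (Fin n)).powersetCard j).card := by
                  refine Finset.card_le_card fun J hJ => ?_
                  exact Finset.mem_powersetCard.2
                    ⟨Finset.subset_univ J, (Finset.mem_filter.1 hJ).2⟩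
              _ = n.choose j := by simp
          exact_mod_cast h1.trans (Nat.choose_le_pow n j)
      _ = _ := by rw [← mul_pow]; congr 1; ring
  calc _ ≤ 𝔼 ω : Fin n → KeyRing P K,
          ∑ A ∈ 𝒜, ∑ J ∈ 𝒥 A, (if OuterBoundary ω A J then (1 : ℝ) else 0) :=
        Finset.expect_le_expect fun ω _ => hpt ω
    _ = ∑ A ∈ 𝒜, ∑ J ∈ 𝒥 A, 𝔼 ω : Fin n → KeyRing P K,
          (if OuterBoundary ω A J then (1 : ℝ) else 0) := by
        rw [Finset.expect_sum_comm]
        refine Finset.sum_congr rfl fun A _ => ?_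
        rw [Finset.expect_sum_comm]
    _ ≤ ∑ A ∈ 𝒜, ∑ J ∈ 𝒥 A, (A.card * ((K : ℝ) ^ 2 / P)) ^ J.card * M A.card :=
        Finset.sum_le_sum fun A hA => Finset.sum_le_sum fun J hJ => hAJ A hA J hJ
    _ ≤ ∑ A ∈ 𝒜,
          (∑ j ∈ Finset.range k, (A.card * (n * ((K : ℝ) ^ 2 / P))) ^ j) * M A.card := by
        refine Finset.sum_le_sum fun A hA => ?_
        rw [← Finset.sum_mul]
        exact mul_le_mul_of_nonneg_right (hJsum A hA) (hM0 A hA)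
    _ = _ := by
        have hmap : ∀ A ∈ 𝒜, A.card ∈ Finset.Icc 1 (n / 2) := by
          intro A hA
          simp only [h𝒜, Finset.mem_filter, Finset.mem_univ, true_and] at hA
          exact Finset.mem_Icc.2 hA
        refine (Finset.sum_fiberwise_of_maps_to hmap _).symm.trans ?_
        refine Finset.sum_congr rfl fun r hr => ?_
        have hf : 𝒜.filter (fun A => A.card = r)
            = (Finset.univ : Finset (Fin n)).powersetCard r := by
          ext A
          simp only [h𝒜, Finset.mem_filter, Finset.mem_univ, true_and, Finset.mem_powersetCard,
            Finset.subset_univ]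
          rw [Finset.mem_Icc] at hr
          constructor
          · exact fun h => h.2
          · rintro rfl
            exact ⟨hr, rfl⟩
        rw [hf]
        calc _ = ∑ A ∈ (Finset.univ : Finset (Fin n)).powersetCard r,
              ((∑ j ∈ Finset.range k, ((r : ℝ) * (n * ((K : ℝ) ^ 2 / P))) ^ j) * M r) := by
              refine Finset.sum_congr rfl fun A hA => ?_
              rw [(Finset.mem_powersetCard.1 hA).2]
          _ = _ := by
              rw [Finset.sum_const, Finset.card_powersetCard, Finset.card_univ, Fintype.card_fin,
                nsmul_eq_mul]

end UnionBound

section Coupling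

variable {n P K : ℕ}

/-- The action of a permutation of the key pool on key rings. -/
def ringPerm (σ : Equiv.Perm (Fin P)) : KeyRing P K ≃ KeyRing P K :=
  σ.finsetCongr.subtypeEquiv fun s => by simp

lemma ringPerm_val (σ : Equiv.Perm (Fin P)) (s : KeyRing P K) :
    (ringPerm σ s).1 = s.1.map σ.toEmbedding := rfl

lemma ringPerm_mul (σ τ : Equiv.Perm (Fin P)) (s : KeyRing P K) :
    ringPerm (σ * τ) s = ringPerm σ (ringPerm τ s) := by
  apply Subtype.ext
  rw [ringPerm_val, ringPerm_val, ringPerm_val, Finset.map_map]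
  rfl

lemma exists_ringPerm_eq (s t : KeyRing P K) : ∃ σ, ringPerm σ s = t := by
  set e : {x // x ∈ s.1} ≃ {x // x ∈ t.1} := Finset.equivOfCardEq (s.2.trans t.2.symm)
  refine ⟨e.extendSubtype, Subtype.ext ?_⟩
  rw [ringPerm_val]
  refine Finset.eq_of_subset_of_card_le ?_ (by rw [Finset.card_map, s.2, t.2])
  intro y hy
  obtain ⟨x, hx, rfl⟩ := Finset.mem_map.1 hy
  exact e.extendSubtype_mem x hx

/-- Independent uniform key rings are obtained by applying independent uniform permutations
to a fixed key ring. -/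
lemma expect_keyRings_eq_expect_perm (s₀ : KeyRing P K) (f : (Fin n → KeyRing P K) → ℝ) :
    𝔼 ω, f ω = 𝔼 σ : Fin n → Equiv.Perm (Fin P), f (fun v => ringPerm (σ v) s₀) := by
  have : Nonempty (KeyRing P K) := ⟨s₀⟩
  have h1 : ∀ ω : Fin n → KeyRing P K,
      𝔼 σ : Fin n → Equiv.Perm (Fin P), f (fun v => ringPerm (σ v) (ω v))
        = 𝔼 σ : Fin n → Equiv.Perm (Fin P), f (fun v => ringPerm (σ v) s₀) := by
    intro ω
    choose τ hτ using fun v => exists_ringPerm_eq s₀ (ω v)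
    refine Fintype.expect_equiv (Equiv.mulRight τ) _ _ fun σ => ?_
    simp [ringPerm_mul, hτ]
  have h2 : ∀ σ : Fin n → Equiv.Perm (Fin P),
      𝔼 ω : Fin n → KeyRing P K, f (fun v => ringPerm (σ v) (ω v)) = 𝔼 ω, f ω := by
    intro σ
    exact Fintype.expect_equiv (Equiv.piCongrRight fun v => ringPerm (σ v)) _ _ fun ω => rfl
  calc 𝔼 ω, f ω = 𝔼 σ : Fin n → Equiv.Perm (Fin P), 𝔼 ω : Fin n → KeyRing P K,
          f (fun v => ringPerm (σ v) (ω v)) := by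
        simp only [h2, Fintype.expect_const]
    _ = 𝔼 ω : Fin n → KeyRing P K, 𝔼 σ : Fin n → Equiv.Perm (Fin P),
          f (fun v => ringPerm (σ v) (ω v)) := Finset.expect_comm _ _ _
    _ = _ := by simp only [h1, Fintype.expect_const]

lemma KConnected.mono {V : Type*} {G H : SimpleGraph V} (hGH : G ≤ H) {k : ℕ}
    (hG : KConnected G k) : KConnected H k := fun S hS =>
  (hG S hS).mono (SimpleGraph.comap_monotone _ hGH)

open Classical in
/-- Failure of `k`-connectivity becomes less likely when the key rings grow. -/
lemma expect_not_kConnected_anti {K' k : ℕ} (hK : K' ≤ K) (hKP : K ≤ P) :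
    𝔼 ω : Fin n → KeyRing P K, (if KConnected (rkgGraph ω) k then (0 : ℝ) else 1)
      ≤ 𝔼 ω : Fin n → KeyRing P K', (if KConnected (rkgGraph ω) k then (0 : ℝ) else 1) := by
  obtain ⟨s⟩ := nonempty_keyRing hKP
  obtain ⟨t, hts, ht⟩ := Finset.exists_subset_card_eq (hK.trans s.2.ge)
  rw [expect_keyRings_eq_expect_perm s, expect_keyRings_eq_expect_perm ⟨t, ht⟩]
  refine Finset.expect_le_expect fun σ _ => ?_
  have himp : KConnected (rkgGraph fun v => ringPerm (σ v) (⟨t, ht⟩ : KeyRing P K')) k →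
      KConnected (rkgGraph fun v => ringPerm (σ v) s) k := by
    refine KConnected.mono ?_
    rintro i j ⟨hij, hne⟩
    refine ⟨hij, hne.mono ?_⟩
    simp only [ringPerm_val]
    exact Finset.inter_subset_inter (Finset.map_subset_map.2 hts) (Finset.map_subset_map.2 hts)
  split_ifs with h1 h2 h2
  · exact le_rfl
  · exact zero_le_one
  · exact absurd (himp h2) h1
  · exact le_rfl

end Coupling

section UniformMeasure

variable {n P K : ℕ}

instance : DiscreteMeasurableSpace (KeyRing P K) := ⟨fun _ => trivial⟩

lemma isProbabilityMeasure_uniformKeyMeasure (h : K ≤ P) :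
    IsProbabilityMeasure (uniformKeyMeasure P K) := by
  have := nonempty_keyRing h
  refine ⟨?_⟩
  rw [uniformKeyMeasure, Measure.smul_apply, Measure.count_univ, smul_eq_mul,
    ENat.card_eq_coe_fintype_card]
  refine ENNReal.inv_mul_cancel ?_ ?_
  · simpa using Fintype.card_ne_zero (α := KeyRing P K)
  · exact ENNReal.natCast_ne_top _

lemma isProbabilityMeasure_rkgMeasure (h : K ≤ P) : IsProbabilityMeasure (rkgMeasure n K P) := by
  have := isProbabilityMeasure_uniformKeyMeasure h
  unfold rkgMeasure
  infer_instance

open Classical in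
lemma rkgMeasure_eq_ofReal_expect (h : K ≤ P) (E : Set (Fin n → KeyRing P K)) :
    rkgMeasure n K P E
      = ENNReal.ofReal (𝔼 ω : Fin n → KeyRing P K, if ω ∈ E then (1 : ℝ) else 0) := by
  have := nonempty_keyRing h
  have := isProbabilityMeasure_uniformKeyMeasure h
  have hsing : ∀ ω : Fin n → KeyRing P K, rkgMeasure n K P {ω}
      = ((Fintype.card (KeyRing P K) : ℝ≥0∞)⁻¹) ^ n := by
    intro ω
    rw [rkgMeasure, Measure.pi_singleton]
    simp [uniformKeyMeasure]
  have h1 : rkgMeasure n K P E = ∑ ω ∈ E.toFinset, rkgMeasure n K P {ω} := by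
    rw [sum_measure_singleton, Set.coe_toFinset]
  rw [h1, Finset.sum_congr rfl fun ω _ => hsing ω, Finset.sum_const,
    Fintype.expect_eq_sum_div_card, Finset.sum_boole, nsmul_eq_mul, Fintype.card_pi,
    Finset.prod_const, Finset.card_univ, Fintype.card_fin]
  have hpos : (0 : ℝ) < ((Fintype.card (KeyRing P K) ^ n : ℕ) : ℝ) := by
    exact_mod_cast pow_pos Fintype.card_pos n
  rw [ENNReal.ofReal_div_of_pos hpos, ENNReal.ofReal_natCast, ENNReal.ofReal_natCast,
    div_eq_mul_inv, ← ENNReal.inv_pow]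
  push_cast
  congr 3
  ext ω
  simp

open Classical in
lemma rkgMeasure_kConnected (h : K ≤ P) (k : ℕ) :
    rkgMeasure n K P {ω | KConnected (rkgGraph ω) k}
      = 1 - ENNReal.ofReal (𝔼 ω : Fin n → KeyRing P K,
          if KConnected (rkgGraph ω) k then (0 : ℝ) else 1) := by
  have := isProbabilityMeasure_rkgMeasure (n := n) h
  have h1 := prob_compl_eq_one_sub (μ := rkgMeasure n K P)
    (s := {ω | ¬ KConnected (rkgGraph ω) k}) (Set.toFinite _).measurableSet
  have h2 : {ω : Fin n → KeyRing P K | ¬ KConnected (rkgGraph ω) k}ᶜ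
      = {ω | KConnected (rkgGraph ω) k} := by ext; simp
  rw [h2] at h1
  rw [h1, rkgMeasure_eq_ofReal_expect h]
  congr 2
  refine Finset.expect_congr rfl fun ω _ => ?_
  by_cases hc : KConnected (rkgGraph ω) k <;> simp [hc]

end UniformMeasure

section Estimates

lemma choose_mul_div_pow_le_exp (N m : ℕ) :
    (N.choose m : ℝ) * ((m : ℝ) / N) ^ m ≤ Real.exp m := by
  rcases Nat.eq_zero_or_pos N with rfl | hN
  · rcases Nat.eq_zero_or_pos m with rfl | hm
    · simp
    · rw [Nat.choose_eq_zero_of_lt hm]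
      simp [Real.exp_nonneg]
  have hN' : (0 : ℝ) < N := by exact_mod_cast hN
  calc (N.choose m : ℝ) * ((m : ℝ) / N) ^ m
      ≤ ((N : ℝ) ^ m / m.factorial) * ((m : ℝ) / N) ^ m := by
        gcongr
        exact Nat.choose_le_pow_div m N
    _ = (m : ℝ) ^ m / m.factorial := by
        rw [div_pow]
        field_simp
    _ ≤ Real.exp m := Real.pow_div_factorial_le_exp _ (by positivity) _

lemma choose_le_exp_mul_pow {n r : ℕ} (hr : 0 < r) (hn : 0 < n) :
    (n.choose r : ℝ) ≤ Real.exp r * ((n : ℝ) / r) ^ r := by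
  have hr' : (0 : ℝ) < r := by exact_mod_cast hr
  have hn' : (0 : ℝ) < n := by exact_mod_cast hn
  have h := mul_le_mul_of_nonneg_right (choose_mul_div_pow_le_exp n r)
    (by positivity : 0 ≤ ((n : ℝ) / r) ^ r)
  have h2 : ((r : ℝ) / n) ^ r * ((n : ℝ) / r) ^ r = 1 := by
    rw [← mul_pow]
    field_simp
    simp
  rwa [mul_assoc, h2, mul_one] at h

lemma exp_mul_quarter_pow_le {m N : ℕ} (h : 4 * m ≤ N) :
    Real.exp m * (1 / 4 : ℝ) ^ (N - m) ≤ (1 / 2 : ℝ) ^ N := by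
  have he : Real.exp 1 ≤ 4 := by linarith [Real.exp_one_lt_d9]
  have h1 : Real.exp m ≤ 4 ^ m := by
    rw [← Real.exp_one_pow]
    exact pow_le_pow_left₀ (Real.exp_nonneg _) he m
  calc Real.exp m * (1 / 4 : ℝ) ^ (N - m)
      ≤ 4 ^ m * (1 / 4 : ℝ) ^ (N - m) := by gcongr
    _ = 4 ^ m * ((1 / 4 : ℝ) ^ m * (1 / 4 : ℝ) ^ (N - 2 * m)) := by
        rw [← pow_add]
        congr 2
        omega
    _ = (1 / 4 : ℝ) ^ (N - 2 * m) := by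
        rw [← mul_assoc, ← mul_pow]
        norm_num
    _ = (1 / 2 : ℝ) ^ (2 * (N - 2 * m)) := by
        rw [pow_mul]
        norm_num
    _ ≤ (1 / 2 : ℝ) ^ N := pow_le_pow_of_le_one (by norm_num) (by norm_num) (by omega)

/-- The probability that some set of `r` nodes holds fewer than a quarter of the maximal possible
number of keys. -/
lemma choose_mul_small_union_le {n K P r m : ℕ} {c : ℝ} (hc : 0 < c) (hn : 0 < n) (hP : 0 < P)
    (hr : 0 < r) (hcP : c * n ≤ P) (hK : 2 ≤ K) (hm : m = min (r * K) P / 4)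
    (hKc : Real.exp 1 * (K / c) * (1 / 2 : ℝ) ^ K ≤ Real.exp (-1)) :
    (n.choose r : ℝ) * (P.choose m * ((m : ℝ) / P) ^ (K * r)) ≤ Real.exp (-(r : ℝ)) := by
  have hr' : (0 : ℝ) < r := by exact_mod_cast hr
  have hn' : (0 : ℝ) < n := by exact_mod_cast hn
  have hP' : (0 : ℝ) < P := by exact_mod_cast hP
  have hmr : 4 * m ≤ K * r := by
    have := min_le_left (r * K) P
    rw [mul_comm K r]
    omega
  have hmP : 4 * m ≤ P := by
    have := min_le_right (r * K) P
    omega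
  have h2r : 2 * r ≤ K * r := Nat.mul_le_mul_right r hK
  have hexp : r ≤ K * r - m := by omega
  set z : ℝ := 4 * m / P with hz
  have hz0 : 0 ≤ z := by positivity
  have hz1 : z ≤ 1 := by
    rw [hz, div_le_one hP']
    exact_mod_cast hmP
  have hzn : (n : ℝ) / r * z ≤ K / c := by
    have h4 : (4 : ℝ) * m ≤ K * r := by exact_mod_cast hmr
    rw [hz, div_mul_div_comm, div_le_div_iff₀ (by positivity) hc]
    calc (n : ℝ) * (4 * m) * c ≤ n * (K * r) * c := by gcongr
      _ = (K * r) * (c * n) := by ring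
      _ ≤ (K * r) * P := by gcongr
      _ = _ := by ring
  have hU : (P.choose m : ℝ) * ((m : ℝ) / P) ^ (K * r) ≤ z ^ r * (1 / 2 : ℝ) ^ (K * r) := by
    calc (P.choose m : ℝ) * ((m : ℝ) / P) ^ (K * r)
        = (P.choose m * ((m : ℝ) / P) ^ m) * ((m : ℝ) / P) ^ (K * r - m) := by
          rw [mul_assoc, ← pow_add]
          congr 2
          omega
      _ ≤ Real.exp m * ((m : ℝ) / P) ^ (K * r - m) := by
          gcongr
          exact choose_mul_div_pow_le_exp P m
      _ = z ^ (K * r - m) * (Real.exp m * (1 / 4 : ℝ) ^ (K * r - m)) := by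
          have : (m : ℝ) / P = z * (1 / 4) := by rw [hz]; ring
          rw [this, mul_pow]
          ring
      _ ≤ z ^ r * (1 / 2 : ℝ) ^ (K * r) :=
          mul_le_mul (pow_le_pow_of_le_one hz0 hz1 hexp) (exp_mul_quarter_pow_le hmr)
            (by positivity) (by positivity)
  calc (n.choose r : ℝ) * (P.choose m * ((m : ℝ) / P) ^ (K * r))
      ≤ (Real.exp r * ((n : ℝ) / r) ^ r) * (z ^ r * (1 / 2 : ℝ) ^ (K * r)) :=
        mul_le_mul (choose_le_exp_mul_pow hr hn) hU (by positivity) (by positivity)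
    _ = (Real.exp 1 * ((n : ℝ) / r * z) * (1 / 2 : ℝ) ^ K) ^ r := by
        rw [← Real.exp_one_pow, pow_mul, mul_pow, mul_pow, mul_pow]
        ring
    _ ≤ (Real.exp (-1)) ^ r := by
        refine pow_le_pow_left₀ (by positivity) (le_trans ?_ hKc) r
        gcongr
    _ = Real.exp (-(r : ℝ)) := by
        rw [← Real.exp_nat_mul]
        congr 1
        ring

/-- The probability that some large set of `r` nodes with many keys has few outer neighbours. -/
lemma choose_mul_exp_large_union_le {n K P r m k : ℕ} {lam : ℝ} (hn : 6 * k ≤ n) (hn0 : 0 < n)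
    (hP4 : 4 ≤ P) (hr : 0 < r) (hrn : r ≤ n / 2) (hK : 48 ≤ K) (hm : m = min (r * K) P / 4)
    (hlam : lam = n * ((K : ℝ) ^ 2 / P)) (hL : 64 ≤ Real.log n) (hlamL : Real.log n ≤ lam)
    (hrL : (n : ℝ) ≤ r * Real.exp (Real.log n / 100)) :
    (n.choose r : ℝ) * Real.exp (-(((n : ℝ) - r - k) * (K / P) * m))
      ≤ Real.exp (-(r : ℝ)) := by
  have hr' : (0 : ℝ) < r := by exact_mod_cast hr
  have hn' : (0 : ℝ) < n := by exact_mod_cast hn0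
  have hP' : (0 : ℝ) < P := by exact_mod_cast (by omega : 0 < P)
  have hK' : (48 : ℝ) ≤ K := by exact_mod_cast hK
  have hθ : (n : ℝ) / 3 ≤ (n : ℝ) - r - k := by
    have h1 : (6 : ℝ) * k ≤ n := by exact_mod_cast hn
    have h2 : (2 : ℝ) * r ≤ n := by exact_mod_cast (by omega : 2 * r ≤ n)
    linarith
  have hθ0 : (0 : ℝ) ≤ (n : ℝ) - r - k := le_trans (by positivity) hθ
  have hrK : 4 ≤ r * K := by nlinarith
  rcases le_total (r * K) P with hle | hle
  · have hm8 : (r : ℝ) * K / 8 ≤ m := by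
      rw [min_eq_left hle] at hm
      have : r * K ≤ 8 * m := by omega
      have : (r : ℝ) * K ≤ 8 * m := by exact_mod_cast this
      linarith
    have hexp : r * Real.log n / 24 ≤ ((n : ℝ) - r - k) * (K / P) * m := by
      calc r * Real.log n / 24 ≤ r * lam / 24 := by gcongr
        _ = (n : ℝ) / 3 * (K / P) * (r * K / 8) := by rw [hlam]; ring
        _ ≤ _ := by
            gcongr
    have hnr : (n : ℝ) / r ≤ Real.exp (Real.log n / 100) := by
      rw [div_le_iff₀ hr', mul_comm]
      exact hrL
    calc (n.choose r : ℝ) * Real.exp (-(((n : ℝ) - r - k) * (K / P) * m))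
        ≤ (Real.exp r * (Real.exp (Real.log n / 100)) ^ r) * Real.exp (-(r * Real.log n / 24)) := by
          refine mul_le_mul ((choose_le_exp_mul_pow hr hn0).trans ?_) ?_ (Real.exp_nonneg _)
            (by positivity)
          · gcongr
          · gcongr
      _ = Real.exp (r * (1 + Real.log n / 100 - Real.log n / 24)) := by
          rw [← Real.exp_nat_mul, ← Real.exp_add, ← Real.exp_add]
          congr 1
          ring
      _ ≤ Real.exp (-(r : ℝ)) := by
          refine Real.exp_le_exp.2 ?_
          nlinarith
  · have hm8 : (P : ℝ) / 8 ≤ m := by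
      rw [min_eq_right hle] at hm
      have : P ≤ 8 * m := by omega
      have : (P : ℝ) ≤ 8 * m := by exact_mod_cast this
      linarith
    have hexp : (n : ℝ) * 2 ≤ ((n : ℝ) - r - k) * (K / P) * m := by
      calc (n : ℝ) * 2 ≤ n * (K / 24) := by gcongr; linarith
        _ = (n : ℝ) / 3 * (K / P) * (P / 8) := by field_simp; ring
        _ ≤ _ := by
            gcongr
    have hch : (n.choose r : ℝ) ≤ Real.exp n := by
      calc (n.choose r : ℝ) ≤ 2 ^ n := by exact_mod_cast Nat.choose_le_two_pow n r
        _ ≤ (Real.exp 1) ^ n := by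
            gcongr
            linarith [Real.add_one_le_exp (1 : ℝ)]
        _ = Real.exp n := Real.exp_one_pow n
    have hrn' : (r : ℝ) ≤ n := by exact_mod_cast (by omega : r ≤ n)
    calc (n.choose r : ℝ) * Real.exp (-(((n : ℝ) - r - k) * (K / P) * m))
        ≤ Real.exp n * Real.exp (-((n : ℝ) * 2)) := by gcongr
      _ = Real.exp (-(n : ℝ)) := by
          rw [← Real.exp_add]
          congr 1
          ring
      _ ≤ Real.exp (-(r : ℝ)) := by gcongr

/-- The expected number of small sets of `r` nodes with few outer neighbours. -/
lemma choose_mul_pow_mul_exp_le {n r k : ℕ} {lam a : ℝ} (hk : 1 ≤ k) (hn : 0 < n) (hr : 1 ≤ r)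
    (hL : 1 ≤ Real.log n)
    (hlo : Real.log n + ((k : ℝ) - 1) * Real.log (Real.log n) + a ≤ lam)
    (hhi : lam ≤ 3 * Real.log n) (hlam : 0 ≤ lam) :
    (n.choose r : ℝ) * (k * (r * lam) ^ (k - 1) * Real.exp (-(r * lam) + r))
      ≤ (k * 3 ^ (k - 1) * (k - 1).factorial) * Real.exp (2 - a) ^ r := by
  have hr' : (1 : ℝ) ≤ r := by exact_mod_cast hr
  have hn' : (0 : ℝ) < n := by exact_mod_cast hn
  set L := Real.log n with hLdef
  have hL0 : 0 < L := by linarith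
  have hkk : ((k - 1 : ℕ) : ℝ) = (k : ℝ) - 1 := by
    rw [Nat.cast_sub hk, Nat.cast_one]
  have hnr : (n.choose r : ℝ) ≤ Real.exp (r * L) := by
    calc (n.choose r : ℝ) ≤ (n : ℝ) ^ r := by exact_mod_cast Nat.choose_le_pow n r
      _ = Real.exp (r * L) := by rw [Real.exp_nat_mul, hLdef, Real.exp_log hn']
  have hrk : (r : ℝ) ^ (k - 1) ≤ (k - 1).factorial * Real.exp r := by
    have := Real.pow_div_factorial_le_exp (r : ℝ) (by positivity) (k - 1)
    rwa [div_le_iff₀ (by positivity), mul_comm] at this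
  have hLk : L ^ (k - 1) ≤ Real.exp (r * ((k - 1 : ℕ) * Real.log L)) := by
    have h1 : L ^ (k - 1) = Real.exp ((k - 1 : ℕ) * Real.log L) := by
      rw [Real.exp_nat_mul, Real.exp_log hL0]
    rw [h1]
    refine Real.exp_le_exp.2 ?_
    have : 0 ≤ ((k - 1 : ℕ) : ℝ) * Real.log L := mul_nonneg (by positivity) (Real.log_nonneg hL)
    nlinarith
  calc (n.choose r : ℝ) * (k * (r * lam) ^ (k - 1) * Real.exp (-(r * lam) + r))
      ≤ Real.exp (r * L) * (k * (r * (3 * L)) ^ (k - 1) *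
          Real.exp (-(r * (L + ((k : ℝ) - 1) * Real.log L + a)) + r)) := by gcongr
    _ = Real.exp (r * L) * (k * (3 ^ (k - 1) * ((r : ℝ) ^ (k - 1) * L ^ (k - 1))) *
          Real.exp (-(r * (L + ((k : ℝ) - 1) * Real.log L + a)) + r)) := by
        rw [mul_pow, mul_pow]
        ring
    _ ≤ Real.exp (r * L) * (k * (3 ^ (k - 1) * (((k - 1).factorial * Real.exp r) *
          Real.exp (r * ((k - 1 : ℕ) * Real.log L)))) *
          Real.exp (-(r * (L + ((k : ℝ) - 1) * Real.log L + a)) + r)) := by gcongr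
    _ = (k * 3 ^ (k - 1) * (k - 1).factorial) * (Real.exp (r * L) * Real.exp r *
          Real.exp (r * ((k - 1 : ℕ) * Real.log L)) *
          Real.exp (-(r * (L + ((k : ℝ) - 1) * Real.log L + a)) + r)) := by ring
    _ = _ := by
        rw [← Real.exp_add, ← Real.exp_add, ← Real.exp_add, ← Real.exp_nat_mul, hkk]
        congr 2
        ring

lemma sum_range_pow_le {y : ℝ} (hy : 1 ≤ y) {k : ℕ} :
    ∑ j ∈ Finset.range k, y ^ j ≤ k * y ^ (k - 1) := by
  calc ∑ j ∈ Finset.range k, y ^ j ≤ ∑ _j ∈ Finset.range k, y ^ (k - 1) := by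
        refine Finset.sum_le_sum fun j hj => pow_le_pow_right₀ hy ?_
        have := Finset.mem_range.1 hj
        omega
    _ = _ := by simp

lemma sum_Icc_one_pow_le {q : ℝ} (hq : 0 ≤ q) (hq2 : q ≤ 1 / 2) (N : ℕ) :
    ∑ r ∈ Finset.Icc 1 N, q ^ r ≤ 2 * q := by
  have key : ∀ N : ℕ, ∑ r ∈ Finset.Icc 1 N, q ^ r + 2 * q ^ (N + 1) ≤ 2 * q := by
    intro N
    induction N with
    | zero => simp
    | succ N ih =>
      rw [Finset.sum_Icc_succ_top (by omega)]
      have : 2 * q ^ (N + 1 + 1) ≤ q ^ (N + 1) := by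
        rw [pow_succ]
        nlinarith [pow_nonneg hq (N + 1)]
      linarith
  have := key N
  have : 0 ≤ 2 * q ^ (N + 1) := by positivity
  linarith [key N]

end Estimates

section FiniteBound

variable {n P K k : ℕ}

lemma expect_exp_keyUnion_small_le (h : K ≤ P) (hP : 0 < P) {A : Finset (Fin n)}
    (hθ : (0 : ℝ) ≤ (n : ℝ) - A.card - k)
    (hsmall : ((A.card : ℝ) + k) * ((K : ℝ) ^ 2 / P)
      + Real.exp (n * (K / P)) * (A.card * ((K : ℝ) ^ 2 / P)) ≤ 1) :
    𝔼 ω : Fin n → KeyRing P K,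
        Real.exp (-(((n : ℝ) - A.card - k) * (K / P) * (keyUnion ω A).card))
      ≤ Real.exp (-(A.card * (n * ((K : ℝ) ^ 2 / P))) + A.card) := by
  set r : ℝ := (A.card : ℝ) with hr
  have hr0 : 0 ≤ r := by positivity
  set x : ℝ := (K : ℝ) ^ 2 / P with hx
  have hx0 : 0 ≤ x := by positivity
  set θ : ℝ := ((n : ℝ) - r - k) * (K / P) with hθdef
  have hθ0 : 0 ≤ θ := mul_nonneg hθ (by positivity)
  have hθn : θ ≤ n * (K / P) := by
    refine mul_le_mul_of_nonneg_right ?_ (by positivity)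
    have : (0 : ℝ) ≤ k := by positivity
    linarith
  refine (expect_exp_keyUnion_le h hP hθ0 A).trans (Real.exp_le_exp.2 ?_)
  have h1 : θ * (r * K) = r * (n * x) - r * ((r + k) * x) := by
    rw [hθdef, hx]
    ring
  have h2 : (Real.exp θ - 1) * (K / P) * K * r ^ 2 = r * ((Real.exp θ - 1) * (r * x)) := by
    rw [hx]
    ring
  have h3 : (Real.exp θ - 1) * (r * x) ≤ Real.exp (n * (K / P)) * (r * x) := by
    refine mul_le_mul_of_nonneg_right ?_ (by positivity)
    have := Real.exp_le_exp.2 hθn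
    linarith
  have h4 : r * ((r + k) * x + (Real.exp θ - 1) * (r * x)) ≤ r * 1 :=
    mul_le_mul_of_nonneg_left (by linarith) hr0
  rw [h1, h2]
  linarith

open Classical in
/-- Explicit bound for the probability that the random key graph is not `k`-connected. -/
lemma expect_not_kConnected_le_explicit {c a : ℝ} (hk : 1 ≤ k) (hkn : 6 * k ≤ n) (h : K ≤ P)
    (hc : 0 < c) (hcP : c * n ≤ P) (hK : 48 ≤ K)
    (hKc : Real.exp 1 * (K / c) * (1 / 2 : ℝ) ^ K ≤ Real.exp (-1))
    (hL : 64 ≤ Real.log n) (hLn : 3 * Real.log n ≤ n)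
    (hlo : Real.log n + ((k : ℝ) - 1) * Real.log (Real.log n) + a ≤ n * ((K : ℝ) ^ 2 / P))
    (hlo' : Real.log n ≤ n * ((K : ℝ) ^ 2 / P))
    (hhi : n * ((K : ℝ) ^ 2 / P) ≤ 3 * Real.log n)
    (hsmall : 3 * Real.log n * (Real.exp (-(Real.log n / 100)) + k * Real.exp (-Real.log n))
      + Real.exp (√(3 * Real.log n / c)) * (3 * Real.log n * Real.exp (-(Real.log n / 100))) ≤ 1)
    (ha : Real.exp (2 - a) ≤ 1 / 2) :
    𝔼 ω : Fin n → KeyRing P K, (if KConnected (rkgGraph ω) k then (0 : ℝ) else 1)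
      ≤ (k * 3 ^ (k - 1) * (k - 1).factorial) * (2 * Real.exp (2 - a)) +
        2 * k * Real.exp ((2 * k + 1) * Real.log n - Real.exp (99 / 100 * Real.log n)) := by
  have hn : 0 < n := by omega
  have hP : 0 < P := by omega
  have hn' : (0 : ℝ) < n := by exact_mod_cast hn
  have hn1 : (1 : ℝ) ≤ n := by exact_mod_cast hn
  have hP' : (0 : ℝ) < P := by exact_mod_cast hP
  have hK' : (0 : ℝ) < K := by exact_mod_cast (by omega : 0 < K)
  set L := Real.log n with hLdef
  set x : ℝ := (K : ℝ) ^ 2 / P with hx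
  have hx0 : 0 < x := by positivity
  have hnL : (n : ℝ) = Real.exp L := by rw [hLdef, Real.exp_log hn']
  have hdeg : (n : ℝ) * (K / P) ≤ √(3 * L / c) := by
    refine Real.le_sqrt_of_sq_le ?_
    have h1 : ((n : ℝ) * (K / P)) ^ 2 = (n * x) * (n / P) := by
      rw [hx]
      field_simp
    have h2 : (n : ℝ) / P ≤ 1 / c := by
      rw [div_le_div_iff₀ hP' hc]
      linarith
    calc ((n : ℝ) * (K / P)) ^ 2 = (n * x) * (n / P) := h1
      _ ≤ (3 * L) * (1 / c) := by gcongr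
      _ = 3 * L / c := by ring
  have hxn : x ≤ 3 * L * Real.exp (-L) := by
    rw [Real.exp_neg, ← hnL, ← div_eq_mul_inv, le_div_iff₀ hn']
    linarith
  have hrx : ∀ r : ℕ, (r : ℝ) * Real.exp (L / 100) < n →
      (r : ℝ) * x ≤ 3 * L * Real.exp (-(L / 100)) := by
    intro r hr
    have h1 : (r : ℝ) ≤ n * Real.exp (-(L / 100)) := by
      rw [Real.exp_neg, ← div_eq_mul_inv, le_div_iff₀ (Real.exp_pos _)]
      exact hr.le
    calc (r : ℝ) * x ≤ (n * Real.exp (-(L / 100))) * x := by gcongr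
      _ = (n * x) * Real.exp (-(L / 100)) := by ring
      _ ≤ _ := by gcongr
  set m : ℕ → ℕ := fun r => min (r * K) P / 4 with hm
  set M : ℕ → ℝ := fun r => if (n : ℝ) ≤ r * Real.exp (L / 100) then
      Real.exp (-(((n : ℝ) - r - k) * (K / P) * m r)) +
        P.choose (m r) * ((m r : ℝ) / P) ^ (K * r)
    else Real.exp (-(r * (n * x)) + r) with hMdef
  have hθ : ∀ r : ℕ, r ≤ n / 2 → (0 : ℝ) ≤ (n : ℝ) - r - k := by
    intro r hr
    have h1 : ((r + k : ℕ) : ℝ) ≤ n := by exact_mod_cast (by omega : r + k ≤ n)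
    push_cast at h1
    linarith
  refine (expect_not_kConnected_le hk (by omega) h hP M ?_).trans ?_
  · intro A hA1 hA2
    simp only [hMdef]
    split_ifs with hcase
    · exact expect_exp_keyUnion_le_add h hP (mul_nonneg (hθ _ hA2) (by positivity)) A
        ((Nat.div_le_self _ _).trans (min_le_right _ _))
    · refine expect_exp_keyUnion_small_le h hP (hθ _ hA2) ?_
      have h1 := hrx A.card (not_le.1 hcase)
      have h2 : (k : ℝ) * x ≤ k * (3 * L * Real.exp (-L)) := by gcongr
      have h3 : Real.exp (n * (K / P)) * (A.card * x)
          ≤ Real.exp (√(3 * L / c)) * (3 * L * Real.exp (-(L / 100))) :=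
        mul_le_mul (Real.exp_le_exp.2 hdeg) h1 (mul_nonneg (Nat.cast_nonneg _) hx0.le)
          (Real.exp_nonneg _)
      nlinarith
  set C : ℝ := k * 3 ^ (k - 1) * (k - 1).factorial with hC
  have hC0 : 0 ≤ C := by positivity
  set D : ℝ := 2 * k * Real.exp (2 * k * L - Real.exp (99 / 100 * L)) with hD
  have hD0 : 0 ≤ D := by positivity
  have hterm : ∀ r ∈ Finset.Icc 1 (n / 2), (n.choose r : ℝ) *
      ((∑ j ∈ Finset.range k, (r * (n * x)) ^ j) * M r) ≤ C * Real.exp (2 - a) ^ r + D := by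
    intro r hr
    rw [Finset.mem_Icc] at hr
    have hr1 : (1 : ℝ) ≤ r := by exact_mod_cast hr.1
    have hrn : (r : ℝ) ≤ n := by exact_mod_cast (by omega : r ≤ n)
    have hy : (1 : ℝ) ≤ r * (n * x) := by nlinarith
    have hsum := sum_range_pow_le hy (k := k)
    have hS0 : 0 ≤ ∑ j ∈ Finset.range k, (r * (n * x)) ^ j :=
      Finset.sum_nonneg fun j _ => by positivity
    simp only [hMdef]
    split_ifs with hcase
    · have hA := choose_mul_exp_large_union_le (m := m r) hkn hn (by omega) hr.1 hr.2 hK rfl rfl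
        hL hlo' hcase
      have hB := choose_mul_small_union_le (m := m r) hc hn hP hr.1 hcP (by omega) rfl hKc
      have hnr : Real.exp (99 / 100 * L) ≤ r := by
        have h1 : Real.exp (99 / 100 * L) = n * Real.exp (-(L / 100)) := by
          rw [hnL, ← Real.exp_add]
          congr 1
          ring
        rw [h1, Real.exp_neg, ← div_eq_mul_inv, div_le_iff₀ (Real.exp_pos _)]
        exact hcase
      have hpow : (r * (n * x)) ^ (k - 1) ≤ Real.exp (2 * k * L) := by
        calc (r * (n * x)) ^ (k - 1) ≤ ((n : ℝ) * n) ^ (k - 1) := by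
              gcongr
              exact hhi.trans hLn
          _ ≤ ((n : ℝ) * n) ^ k := by
              refine pow_le_pow_right₀ ?_ (Nat.sub_le k 1)
              nlinarith
          _ = Real.exp (2 * k * L) := by
              rw [hnL, ← Real.exp_add, ← Real.exp_nat_mul]
              congr 1
              ring
      calc _ = (∑ j ∈ Finset.range k, (r * (n * x)) ^ j) *
            ((n.choose r : ℝ) * Real.exp (-(((n : ℝ) - r - k) * (K / P) * m r)) +
              (n.choose r : ℝ) * (P.choose (m r) * ((m r : ℝ) / P) ^ (K * r))) := by ring
        _ ≤ (k * Real.exp (2 * k * L)) *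
            (Real.exp (-(r : ℝ)) + Real.exp (-(r : ℝ))) := by
            refine mul_le_mul (hsum.trans ?_) (add_le_add hA hB) (by positivity) (by positivity)
            gcongr
        _ ≤ (k * Real.exp (2 * k * L)) * (2 * Real.exp (-(Real.exp (99 / 100 * L)))) := by
            have : Real.exp (-(r : ℝ)) ≤ Real.exp (-(Real.exp (99 / 100 * L))) := by gcongr
            gcongr
            linarith
        _ = D := by
            rw [hD, sub_eq_add_neg, Real.exp_add]
            ring
        _ ≤ _ := le_add_of_nonneg_left (by positivity)
    · calc _ ≤ (n.choose r : ℝ) *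
            (k * (r * (n * x)) ^ (k - 1) * Real.exp (-(r * (n * x)) + r)) := by gcongr
        _ ≤ C * Real.exp (2 - a) ^ r :=
            choose_mul_pow_mul_exp_le hk hn hr.1 (by linarith) hlo hhi (by positivity)
        _ ≤ _ := le_add_of_nonneg_right hD0
  refine (Finset.sum_le_sum hterm).trans ?_
  rw [Finset.sum_add_distrib, ← Finset.mul_sum]
  refine add_le_add (mul_le_mul_of_nonneg_left
    (sum_Icc_one_pow_le (Real.exp_nonneg _) ha _) hC0) ?_
  rw [Finset.sum_const, Nat.card_Icc, nsmul_eq_mul]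
  calc ((n / 2 + 1 - 1 : ℕ) : ℝ) * D ≤ Real.exp L * D := by
        rw [← hnL]
        gcongr
        omega
    _ = _ := by
        have : (2 * (k : ℝ) + 1) * L - Real.exp (99 / 100 * L)
            = L + (2 * k * L - Real.exp (99 / 100 * L)) := by ring
        rw [hD, this, Real.exp_add L]
        ring

end FiniteBound

section Asymptotic

lemma two_thirds_mul_le_floor_sqrt_sq {y : ℝ} (hy : 36 ≤ y) :
    2 / 3 * y ≤ (⌊√y⌋₊ : ℝ) ^ 2 := by
  have h1 : (6 : ℝ) ≤ √y := Real.le_sqrt_of_sq_le (by linarith)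
  have h2 : √y - 1 < ⌊√y⌋₊ := Nat.sub_one_lt_floor _
  have h3 : √y ^ 2 = y := Real.sq_sqrt (by linarith)
  nlinarith

/-- Truncating the key ring size keeps the expected degree between the connectivity threshold
and three times the logarithm of the number of nodes. -/
lemma truncated_ring_bounds {n K P k : ℕ} {c α : ℝ} (hn : 0 < n) (hP : 0 < P)
    (hcP : c * n ≤ P) (hL : 1 ≤ Real.log n) (hcL : 12 ≤ c * Real.log n)
    (hα : (K : ℝ) ^ 2 / P = (Real.log n + ((k : ℝ) - 1) * Real.log (Real.log n) + α) / n) :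
    Real.log n + ((k : ℝ) - 1) * Real.log (Real.log n) +
        min α (Real.log n - ((k : ℝ) - 1) * Real.log (Real.log n))
      ≤ n * ((min K ⌊√(3 * P * Real.log n / n)⌋₊ : ℕ) ^ 2 / P) ∧
    n * (((min K ⌊√(3 * P * Real.log n / n)⌋₊ : ℕ) : ℝ) ^ 2 / P) ≤ 3 * Real.log n := by
  have hn' : (0 : ℝ) < n := by exact_mod_cast hn
  have hP' : (0 : ℝ) < P := by exact_mod_cast hP
  set L := Real.log n
  set y : ℝ := 3 * P * L / n with hy
  have hy0 : 0 ≤ y := by positivity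
  have hy36 : 36 ≤ y := by
    rw [hy, le_div_iff₀ hn']
    nlinarith
  have hyL : n * (y / P) = 3 * L := by
    rw [hy]
    field_simp
  constructor
  · rcases le_total K ⌊√y⌋₊ with hKT | hKT
    · rw [min_eq_left hKT, hα, mul_div_cancel₀ _ hn'.ne']
      gcongr
      exact min_le_left _ _
    · rw [min_eq_right hKT]
      have h1 : n * (2 / 3 * y / P) ≤ n * ((⌊√y⌋₊ : ℝ) ^ 2 / P) := by
        gcongr
        exact two_thirds_mul_le_floor_sqrt_sq hy36
      have h2 : n * (2 / 3 * y / P) = 2 * L := by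
        rw [mul_div_assoc, mul_left_comm, hyL]
        ring
      have := min_le_right α (L - ((k : ℝ) - 1) * Real.log L)
      linarith
  · rw [← hyL]
    have h1 : ((min K ⌊√y⌋₊ : ℕ) : ℝ) ≤ √y :=
      le_trans (by exact_mod_cast min_le_right _ _) (Nat.floor_le (Real.sqrt_nonneg _))
    have h2 : ((min K ⌊√y⌋₊ : ℕ) : ℝ) ^ 2 ≤ y := by
      calc _ ≤ √y ^ 2 := by gcongr
        _ = y := Real.sq_sqrt hy0
    gcongr

lemma tendsto_mul_exp_neg_mul {b : ℝ} (hb : 0 < b) :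
    Tendsto (fun x : ℝ => x * Real.exp (-(b * x))) atTop (nhds 0) := by
  have h := (Real.tendsto_pow_mul_exp_neg_atTop_nhds_zero 1).comp
    (tendsto_id.const_mul_atTop hb)
  have h' := h.const_mul b⁻¹
  rw [mul_zero] at h'
  refine h'.congr fun x => ?_
  simp only [Function.comp_apply, id, pow_one]
  field_simp

lemma eventually_small_set_condition {c : ℝ} (hc : 0 < c) (k : ℕ) :
    ∀ᶠ L : ℝ in atTop,
      3 * L * (Real.exp (-(L / 100)) + k * Real.exp (-L))
        + Real.exp (√(3 * L / c)) * (3 * L * Real.exp (-(L / 100))) ≤ 1 := by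
  have h := (tendsto_mul_exp_neg_mul (b := 1 / 200) (by norm_num)).const_mul (3 * (2 + k : ℝ))
  rw [mul_zero] at h
  filter_upwards [h.eventually_le_const zero_lt_one, eventually_ge_atTop 0,
    eventually_ge_atTop (120000 / c)] with L h1 h0 hLc
  have hsqrt : √(3 * L / c) ≤ L / 200 := by
    refine Real.sqrt_le_iff.2 ⟨by positivity, ?_⟩
    rw [div_le_iff₀ hc] at hLc ⊢
    nlinarith
  set e := Real.exp (-(1 / 200 * L)) with he
  have h2 : Real.exp (-(L / 100)) ≤ e := Real.exp_le_exp.2 (by linarith)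
  have h3 : Real.exp (-L) ≤ e := Real.exp_le_exp.2 (by linarith)
  have h4 : Real.exp (√(3 * L / c)) * Real.exp (-(L / 100)) ≤ e := by
    rw [← Real.exp_add]
    exact Real.exp_le_exp.2 (by linarith)
  calc _ = 3 * L * (Real.exp (-(L / 100)) + k * Real.exp (-L)
        + Real.exp (√(3 * L / c)) * Real.exp (-(L / 100))) := by ring
    _ ≤ 3 * L * (e + k * e + e) := by gcongr
    _ = 3 * (2 + k) * (L * e) := by ring
    _ ≤ 1 := h1

lemma tendsto_mul_sub_exp_atBot (b : ℝ) :
    Tendsto (fun x : ℝ => b * x - Real.exp (99 / 100 * x)) atTop atBot := by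
  refine tendsto_atBot_mono' _ ?_ tendsto_neg_atTop_atBot
  filter_upwards [eventually_ge_atTop 0, eventually_ge_atTop (4 * (b + 1))] with x h0 hb
  have := Real.quadratic_le_exp_of_nonneg (by positivity : 0 ≤ 99 / 100 * x)
  nlinarith

lemma tendsto_sub_mul_log_atTop (b : ℝ) :
    Tendsto (fun x : ℝ => x - b * Real.log x) atTop atTop := by
  have h : (fun x : ℝ => b * Real.log x) =o[atTop] (id : ℝ → ℝ) :=
    Real.isLittleO_log_id_atTop.const_mul_left b
  have h1 := h.bound (c := 1 / 2) (by norm_num)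
  refine tendsto_atTop_mono' _ ?_ (tendsto_id.const_mul_atTop (by norm_num : (0 : ℝ) < 1 / 2))
  filter_upwards [h1, eventually_ge_atTop 0] with x hx h0
  have := le_of_abs_le hx
  rw [id, Real.norm_eq_abs, abs_of_nonneg h0] at this
  simp only [id]
  linarith

lemma eventually_ring_condition {c : ℝ} :
    ∀ᶠ m : ℕ in atTop, Real.exp 1 * (m / c) * (1 / 2 : ℝ) ^ m ≤ Real.exp (-1) := by
  have h := (tendsto_self_mul_const_pow_of_lt_one (r := (1 / 2 : ℝ)) (by norm_num)
    (by norm_num)).const_mul (Real.exp 1 / c)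
  rw [mul_zero] at h
  filter_upwards [h.eventually_le_const (Real.exp_pos (-1))] with m hm
  calc _ = Real.exp 1 / c * (m * (1 / 2 : ℝ) ^ m) := by ring
    _ ≤ _ := hm

open Classical in
lemma tendsto_expect_not_kConnected
    (k : ℕ) (hk : 1 ≤ k) (K P : ℕ → ℕ) (hKP : ∀ n, K n ≤ P n)
    {c : ℝ} (hc : 0 < c) (hcP : ∀ᶠ n : ℕ in atTop, c * (n : ℝ) ≤ (P n : ℝ))
    (α : ℕ → ℝ)
    (hα : ∀ n, 1 ≤ n → (K n : ℝ) ^ 2 / (P n : ℝ) =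
      (Real.log n + ((k : ℝ) - 1) * Real.log (Real.log n) + α n) / (n : ℝ))
    (hαtop : Tendsto α atTop atTop) :
    Tendsto (fun n : ℕ => 𝔼 ω : Fin n → KeyRing (P n) (K n),
      (if KConnected (rkgGraph ω) k then (0 : ℝ) else 1)) atTop (nhds 0) := by
  have hL : Tendsto (fun n : ℕ => Real.log n) atTop atTop :=
    Real.tendsto_log_atTop.comp tendsto_natCast_atTop_atTop
  set K' : ℕ → ℕ := fun n => min (K n) ⌊√(3 * P n * Real.log n / n)⌋₊ with hK'
  set a : ℕ → ℝ := fun n =>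
    min (α n) (Real.log n - ((k : ℝ) - 1) * Real.log (Real.log n)) with ha
  have hatop : Tendsto a atTop atTop :=
    tendsto_atTop.2 fun b => ((tendsto_atTop.1 hαtop b).and
      (tendsto_atTop.1 ((tendsto_sub_mul_log_atTop _).comp hL) b)).mono fun _ h => le_min h.1 h.2
  have hbounds : ∀ᶠ n : ℕ in atTop,
      Real.log n + ((k : ℝ) - 1) * Real.log (Real.log n) + a n ≤ n * ((K' n : ℝ) ^ 2 / P n) ∧
      n * ((K' n : ℝ) ^ 2 / P n) ≤ 3 * Real.log n ∧ Real.log n ≤ n * ((K' n : ℝ) ^ 2 / P n) := by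
    filter_upwards [hcP, hL.eventually_ge_atTop 1, hL.eventually_ge_atTop (12 / c),
      eventually_gt_atTop 0, hatop.eventually_ge_atTop 0] with n h1 h2 h3 h4 h5
    have hP : (0 : ℝ) < P n := lt_of_lt_of_le (by positivity) h1
    rw [div_le_iff₀ hc, mul_comm] at h3
    obtain ⟨hlo, hhi⟩ := truncated_ring_bounds h4 (by exact_mod_cast hP) h1 h2 h3 (hα n h4)
    have hk' : (1 : ℝ) ≤ k := by exact_mod_cast hk
    have := mul_nonneg (sub_nonneg.2 hk') (Real.log_nonneg h2)
    exact ⟨hlo, hhi, by linarith⟩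
  have hK'top : Tendsto K' atTop atTop := by
    rw [← tendsto_natCast_atTop_iff (R := ℝ)]
    refine tendsto_atTop_mono' _ ?_ (Real.tendsto_sqrt_atTop.comp (hL.const_mul_atTop hc))
    filter_upwards [hbounds, hcP, eventually_gt_atTop 0] with n ⟨_, _, h⟩ h1 h2
    have hn : (0 : ℝ) < n := by exact_mod_cast h2
    have hP : (0 : ℝ) < P n := lt_of_lt_of_le (by positivity) h1
    refine Real.sqrt_le_iff.2 ⟨Nat.cast_nonneg _, ?_⟩
    rw [← mul_div_assoc, le_div_iff₀ hP] at h
    refine le_of_mul_le_mul_left ?_ hn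
    have hL0 : 0 ≤ Real.log n := Real.log_nonneg (by exact_mod_cast h2)
    nlinarith
  have hexp : Tendsto (fun n => Real.exp (2 - a n)) atTop (nhds 0) :=
    Real.tendsto_exp_atBot.comp (tendsto_const_nhds.add_atBot (tendsto_neg_atTop_atBot.comp hatop))
  have hlog : ∀ᶠ x : ℝ in atTop, 3 * Real.log x ≤ x := by
    filter_upwards [(tendsto_sub_mul_log_atTop 3).eventually_ge_atTop 0] with x hx
    linarith
  have hbound : Tendsto (fun n : ℕ =>
      (k * 3 ^ (k - 1) * (k - 1).factorial : ℝ) * (2 * Real.exp (2 - a n)) +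
        2 * k * Real.exp ((2 * k + 1) * Real.log n - Real.exp (99 / 100 * Real.log n)))
      atTop (nhds 0) := by
    have h2 := (Real.tendsto_exp_atBot.comp
      ((tendsto_mul_sub_exp_atBot (2 * k + 1)).comp hL)).const_mul (2 * k : ℝ)
    simpa using ((hexp.const_mul 2).const_mul _).add h2
  refine squeeze_zero' (Eventually.of_forall fun n => Finset.expect_nonneg fun ω _ => by
    split_ifs <;> norm_num) ?_ hbound
  filter_upwards [hbounds, hcP, eventually_ge_atTop (6 * k), hK'top.eventually_ge_atTop 48,
    hK'top.eventually (eventually_ring_condition (c := c)), hL.eventually_ge_atTop 64,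
    tendsto_natCast_atTop_atTop.eventually hlog,
    hL.eventually (eventually_small_set_condition hc k),
    hexp.eventually_le_const (by norm_num : (0 : ℝ) < 1 / 2)]
    with n ⟨hlo, hhi, hlo'⟩ hcPn hkn hK48 hKc hL64 hLn hsmall hexpn
  have hKK : K' n ≤ K n := min_le_left _ _
  exact (expect_not_kConnected_anti hKK (hKP n)).trans
    (expect_not_kConnected_le_explicit hk hkn (hKK.trans (hKP n)) hc hcPn hK48 hKc hL64 hLn
      hlo hlo' hhi hsmall hexpn)

end Asymptotic

/-- one-law for `k`-connectivity in random key graphs. -/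
theorem rkg_one_law
    (k : ℕ) (hk : 1 ≤ k) (K P : ℕ → ℕ)
    (hKP : ∀ n, K n ≤ P n)
    (hK2 : ∀ᶠ n : ℕ in atTop, 2 ≤ K n)
    (hP : ∃ c : ℝ, 0 < c ∧ ∀ᶠ n : ℕ in atTop, c * (n : ℝ) ≤ (P n : ℝ))
    (α : ℕ → ℝ)
    (hα : ∀ n, 1 ≤ n → (K n : ℝ) ^ 2 / (P n : ℝ) =
      (Real.log n + ((k : ℝ) - 1) * Real.log (Real.log n) + α n) / (n : ℝ))
    (hαtop : Tendsto α atTop atTop) :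
    Tendsto (fun n : ℕ => rkgMeasure n (K n) (P n)
        {ω | KConnected (rkgGraph ω) k}) atTop (nhds 1) := by
  obtain ⟨c, hc, hcP⟩ := hP
  have h := ENNReal.tendsto_ofReal
    (tendsto_expect_not_kConnected k hk K P hKP hc hcP α hα hαtop)
  have h' := ENNReal.Tendsto.sub (tendsto_const_nhds (x := (1 : ℝ≥0∞))) h
    (Or.inl ENNReal.one_ne_top)
  rw [ENNReal.ofReal_zero, tsub_zero] at h'
  exact h'.congr fun n => (rkgMeasure_kConnected (hKP n) k).symm
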